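/- arXiv:0810.2731 — 3 statements merged into one kernel-verified Lean document; each statement's English description precedes it below -/
import Mathlib

section
/- Fix integers ℓ≥1 and n≥0. The colored q-derangement number d_{ℓ,n}(q) := Σ_{σ ∈ D_{ℓ,n}} q^{fmaj σ} satisfies the explicit formula d_{ℓ,n}(q) = [ℓ]_q[2ℓ]_q⋯[nℓ]_q · Σ_{k=0}^n (−1)^k q^{ℓ·binom(k,2)} / ([ℓ]_q[2ℓ]_q⋯[kℓ]_q) = Σ_{k=0}^n (−1)^k q^{ℓ·binom(k,2)} [(k+1)ℓ]_q[(k+2)ℓ]_q⋯[nℓ]_q. -/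
/-!
Let `0 ≤ q < 1` and `Q = q ^ ℓ`. Words are taken over the alphabet `ℕ × Fin ℓ`, the letter `(v, c)`
having weight `q ^ (ℓ * v + c)`, so that the words of length `n` have total weight
`(1 - q)⁻¹ ^ n`. Sorting a word stably produces a colored permutation `σ`, and as in MacMahon's
enumeration by major index the words with a given `σ` have total weight `q ^ fmaj σ / (Q; Q)_n`.

Consider the position that an inserted letter takes in the sorted word, as a function of the place
where it is inserted. This function is monotone, and its fixed points are the places where the
letter becomes a fixed point of `σ`. The inserted letter is the last fixed point exactly when the
place is the greatest fixed point of this function (Knaster–Tarski) and the letter is at least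
every fixed letter already present. So the `j` fixed points can be removed one at a time, and what
remains of them is a sorted sequence of `j` parts, which contributes `1 / (Q; Q)_j`. With `d_k` the
derangement number at `q`, this says
`(∑ d_k x^k / (Q; Q)_k) * (∑ x^j / (Q; Q)_j) = ∑ (1 - q)⁻¹ ^ n x^n`.
Euler's inverse `∑ (-1)^j Q^(j choose 2) x^j / (Q; Q)_j` of the second factor gives the formula for
`q` in `[0, 1)`, where two polynomials cannot agree without being equal.
-/

open Finset

/-- A colored permutation in `G_{ℓ,n} ≅ C_ℓ ≀ S_n`: an underlying permutation of `Fin n`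
together with a color (exponent of `ζ`) attached to each position. The letter at (0-based)
position `i` of the word of `σ` is `ζ^(σ.2 i) · (σ.1 i + 1)` (1-based value `σ.1 i + 1`). -/
abbrev CP (ℓ n : ℕ) := Equiv.Perm (Fin n) × (Fin n → Fin ℓ)

namespace CP

variable {ℓ n : ℕ}

/-- `gtLetter a b` : the letter `a = (colorIndex, value)` is greater than `b` in the order
`1 > ζ > ⋯ > ζ^{ℓ-1}` on colors, colors compared first. -/
def gtLetter (a b : ℕ × ℕ) : Prop := a.1 < b.1 ∨ (a.1 = b.1 ∧ b.2 < a.2)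

instance (a b : ℕ × ℕ) : Decidable (gtLetter a b) := by unfold gtLetter; infer_instance

/-- The letter (color index, 0-based absolute value) at 0-based position `i`. -/
def letter (σ : CP ℓ n) (i : ℕ) : ℕ × ℕ :=
  if h : i < n then ((σ.2 ⟨i, h⟩ : ℕ), (σ.1 ⟨i, h⟩ : ℕ)) else (0, 0)

/-- 0-based descent positions : `i < n-1` such that `x_{i+1} > x_{i+2}` (1-based positions). -/
def desSet (σ : CP ℓ n) : Finset ℕ :=
  (range (n - 1)).filter fun i => gtLetter (letter σ i) (letter σ (i + 1))

/-- Major index: sum of the (1-based) descent places. -/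
def maj (σ : CP ℓ n) : ℕ := ∑ i ∈ desSet σ, (i + 1)

/-- Number of descents. -/
def des (σ : CP ℓ n) : ℕ := (desSet σ).card

/-- `col σ = Σ_j j·#{i : ε_{x_i} = ζ^j}`. -/
def col (σ : CP ℓ n) : ℕ := ∑ i, (σ.2 i : ℕ)

/-- flag major index. -/
def fmaj (σ : CP ℓ n) : ℕ := ℓ * maj σ + col σ

/-- The set of fixed points (position fixed and color `ζ^0 = 1`). -/
def fixSet (σ : CP ℓ n) : Finset (Fin n) :=
  univ.filter fun i => σ.1 i = i ∧ (σ.2 i : ℕ) = 0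

def fix (σ : CP ℓ n) : ℕ := (fixSet σ).card

/-- Number of excedances `x_i > i`. -/
def exc (σ : CP ℓ n) : ℕ :=
  (univ.filter fun i : Fin n => (σ.2 i : ℕ) = 0 ∧ (i : ℕ) < (σ.1 i : ℕ)).card

lemma card_nonfix (σ : CP ℓ n) : ((fixSet σ)ᶜ).card = n - fix σ := by
  rw [Finset.card_compl, fix, Fintype.card_fin]

lemma card_vals (σ : CP ℓ n) : (((fixSet σ)ᶜ).image σ.1).card = n - fix σ := by
  rw [Finset.card_image_of_injective _ σ.1.injective, card_nonfix]

/-- The bijection from nonfixed positions to the set of their values. -/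
def derMid (σ : CP ℓ n) :
    {x // x ∈ ((fixSet σ)ᶜ : Finset (Fin n))} ≃ {x // x ∈ ((fixSet σ)ᶜ).image σ.1} where
  toFun p := ⟨σ.1 p.1, Finset.mem_image_of_mem _ p.2⟩
  invFun v := ⟨σ.1.symm v.1, by
    obtain ⟨p, hp, hpv⟩ := Finset.mem_image.mp v.2
    simpa [← hpv] using hp⟩
  left_inv p := by simp
  right_inv v := by simp

/-- The derangement part `Der σ`: delete the fixed points of the word of `σ`, replace each
absolute value by its rank among the remaining values, and keep the colors. -/
def Der (σ : CP ℓ n) : CP ℓ (n - fix σ) :=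
  let eP := ((fixSet σ)ᶜ).orderIsoOfFin (card_nonfix σ)
  let eV := (((fixSet σ)ᶜ).image σ.1).orderIsoOfFin (card_vals σ)
  (eP.toEquiv.trans ((derMid σ).trans eV.toEquiv.symm), fun i => σ.2 (eP i))

/-- `maf σ = maj (Der σ) + Σ_{j=1}^k (i_j − j)` over the (1-based) fixed points
`i_1 < ⋯ < i_k`; with 0-based fixed positions this is `Σ f − k(k−1)/2`. -/
def maf (σ : CP ℓ n) : ℕ := maj (Der σ) + ((∑ i ∈ fixSet σ, (i : ℕ)) - (fix σ).choose 2)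

/-- flag maf. -/
def fmaf (σ : CP ℓ n) : ℕ := ℓ * maf σ + col σ

end CP

/-- The q-integer `[k]_q = 1 + q + ⋯ + q^{k-1}`. -/
def qint {R : Type*} [CommSemiring R] (q : R) (k : ℕ) : R := ∑ i ∈ range k, q ^ i

namespace QDerangement

open scoped ENNReal

/-! ### Inserting a letter into a stably sorted word -/

section StableSort

variable {α : Type*} [LinearOrder α] {n : ℕ}

lemma sort_eq_iff_strictMono {f : Fin n → α} {σ : Equiv.Perm (Fin n)} :
    Tuple.sort f = σ ↔ StrictMono fun k => toLex (f (σ k), σ k) := by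
  rw [eq_comm, Tuple.eq_sort_iff']
  rfl

lemma sort_symm_lt_sort_symm_iff {f : Fin n → α} {i j : Fin n} :
    (Tuple.sort f).symm i < (Tuple.sort f).symm j ↔ toLex (f i, i) < toLex (f j, j) := by
  have hmono := sort_eq_iff_strictMono.1 (Eq.refl (Tuple.sort f))
  rw [← hmono.lt_iff_lt, Equiv.apply_symm_apply, Equiv.apply_symm_apply]

lemma val_sort_symm (f : Fin n → α) (i : Fin n) :
    ((Tuple.sort f).symm i : ℕ) = #{j | f j < f i ∨ f j = f i ∧ j < i} := by
  simp_rw [← Prod.Lex.toLex_lt_toLex (x := (f _, _)) (y := (f i, i)),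
    ← sort_symm_lt_sort_symm_iff]
  rw [← Fin.card_Iio, ← card_map (Tuple.sort f).toEmbedding]
  congr 1
  ext j
  simp [mem_map_equiv]

lemma card_filter_univ_succAbove (p : Fin (n + 1)) (P : Fin (n + 1) → Prop) [DecidablePred P] :
    #{j | P j} = #{j | P (p.succAbove j)} + if P p then 1 else 0 := by
  rw [card_filter, Fin.sum_univ_succAbove _ p, card_filter, add_comm]

lemma val_sort_symm_insertNth_self (p : Fin (n + 1)) (b : α) (f : Fin n → α) :
    ((Tuple.sort (p.insertNth (α := fun _ => α) b f)).symm p : ℕ) =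
      #{j | f j < b ∨ f j = b ∧ j.castSucc < p} := by
  simp [val_sort_symm, card_filter_univ_succAbove p, Fin.succAbove_lt_iff_castSucc_lt]

lemma val_sort_symm_insertNth_succAbove (p : Fin (n + 1)) (b : α) (f : Fin n → α) (i : Fin n) :
    letI π := (Tuple.sort (p.insertNth (α := fun _ => α) b f)).symm
    (π (p.succAbove i) : ℕ) =
      (Tuple.sort f).symm i + if π p < π (p.succAbove i) then 1 else 0 := by
  simp [val_sort_symm, card_filter_univ_succAbove p, sort_symm_lt_sort_symm_iff,
    Prod.Lex.toLex_lt_toLex, (Fin.strictMono_succAbove p).lt_iff_lt]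

/-- The position of the letter `b` in the stable sorting of the word obtained from `f` by inserting
`b` at position `p`, as a function of `p`. Its fixed points are the positions `p` which make the
inserted letter a fixed point of the sorting. -/
def insertRank (b : α) (f : Fin n → α) : Fin (n + 1) →o Fin (n + 1) where
  toFun p := (Tuple.sort (p.insertNth (α := fun _ => α) b f)).symm p
  monotone' p p' hp := by
    rw [Fin.le_def, val_sort_symm_insertNth_self, val_sort_symm_insertNth_self]
    gcongr

lemma val_insertRank (b : α) (f : Fin n → α) (p : Fin (n + 1)) :
    (insertRank b f p : ℕ) = #{j | f j < b ∨ f j = b ∧ j.castSucc < p} :=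
  val_sort_symm_insertNth_self p b f

lemma val_insertRank_succ (b : α) (f : Fin n → α) (i : Fin n) :
    (insertRank b f i.succ : ℕ) = insertRank b f i.castSucc + if f i = b then 1 else 0 := by
  have hsplit (j : Fin n) : (if f j < b ∨ f j = b ∧ j.castSucc < i.succ then 1 else 0) =
      (if f j < b ∨ f j = b ∧ j.castSucc < i.castSucc then 1 else 0) +
        if i = j then (if f i = b then 1 else 0) else 0 := by
    grind
  simp only [val_insertRank, card_filter, hsplit, sum_add_distrib, sum_ite_eq, mem_univ, if_true]

lemma antitone_insertRank_sub (b : α) (f : Fin n → α) :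
    Antitone fun p => (insertRank b f p : ℤ) - p := by
  refine Fin.antitone_iff_succ_le.2 fun i => ?_
  rw [val_insertRank_succ, Fin.val_succ, Fin.val_castSucc]
  split_ifs <;> push_cast <;> omega

lemma val_insertRank_castSucc_self (f : Fin n → α) (i : Fin n) :
    (insertRank (f i) f i.castSucc : ℕ) = (Tuple.sort f).symm i := by
  simp [val_insertRank, val_sort_symm]

lemma sort_symm_lt_insertRank_succ {b : α} {f : Fin n → α} {i : Fin n} (h : f i ≤ b) :
    ((Tuple.sort f).symm i : ℕ) < insertRank b f i.succ := by
  rw [val_sort_symm, val_insertRank]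
  refine card_lt_card (ssubset_iff_of_subset ?_ |>.2 ⟨i, ?_, ?_⟩)
  · intro j
    simp only [mem_filter, mem_univ, true_and]
    grind
  · simp [h.lt_or_eq]
  · simp

open scoped Classical in
/-- The fixed points of the stable sorting of the word `f` whose letter lies in `S`. -/
noncomputable def sortFixed (S : Set α) (f : Fin n → α) : Finset (Fin n) :=
  {i | Tuple.sort f i = i ∧ f i ∈ S}

variable {S : Set α}

lemma mem_sortFixed {f : Fin n → α} {i : Fin n} :
    i ∈ sortFixed S f ↔ Tuple.sort f i = i ∧ f i ∈ S := by
  simp only [sortFixed, mem_filter_univ]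

lemma mem_sortFixed_iff_symm {f : Fin n → α} {i : Fin n} :
    i ∈ sortFixed S f ↔ (Tuple.sort f).symm i = i ∧ f i ∈ S := by
  rw [mem_sortFixed, Equiv.symm_apply_eq, eq_comm (a := i)]

lemma apply_le_apply_of_mem_sortFixed {f : Fin n → α} {i j : Fin n} (hi : i ∈ sortFixed S f)
    (hj : j ∈ sortFixed S f) (hij : i ≤ j) : f i ≤ f j := by
  simpa [(mem_sortFixed.1 hi).1, (mem_sortFixed.1 hj).1] using Tuple.monotone_sort f hij

lemma self_mem_sortFixed_insertNth {p : Fin (n + 1)} {b : α} {f : Fin n → α} :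
    p ∈ sortFixed S (p.insertNth (α := fun _ => α) b f) ↔ insertRank b f p = p ∧ b ∈ S := by
  rw [mem_sortFixed_iff_symm, Fin.insertNth_apply_same]
  rfl

lemma succAbove_mem_sortFixed_insertNth {p : Fin (n + 1)} {b : α} {f : Fin n → α}
    (hp : insertRank b f p = p) (i : Fin n) :
    p.succAbove i ∈ sortFixed S (p.insertNth (α := fun _ => α) b f) ↔ i ∈ sortFixed S f := by
  have hrank := val_sort_symm_insertNth_succAbove p b f i
  have hp' : (Tuple.sort (p.insertNth (α := fun _ => α) b f)).symm p = p := hp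
  have hne := (Tuple.sort (p.insertNth (α := fun _ => α) b f)).symm.injective.ne
    (p.succAbove_ne i)
  simp only [mem_sortFixed_iff_symm, Fin.insertNth_apply_succAbove]
  refine and_congr_left fun _ => ?_
  rw [hp'] at hne hrank
  simp only [Fin.ext_iff, Fin.lt_def, Fin.succAbove, Ne] at *
  grind

lemma card_sortFixed_insertNth {p : Fin (n + 1)} {b : α} {f : Fin n → α}
    (h : p ∈ sortFixed S (p.insertNth (α := fun _ => α) b f)) :
    #(sortFixed S (p.insertNth (α := fun _ => α) b f)) = #(sortFixed S f) + 1 := by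
  have hp := (self_mem_sortFixed_insertNth.1 h).1
  have := card_filter_univ_succAbove p (· ∈ sortFixed S (p.insertNth (α := fun _ => α) b f))
  simpa [succAbove_mem_sortFixed_insertNth hp, h] using this

/-- The position is forced: inserting `b` at a smaller fixed point `p` of `insertRank b f` makes
`f p = b`, and `p` is then already a fixed point of the sorting of `f`. -/
lemma eq_gfp_insertRank {p : Fin (n + 1)} {b : α} {f : Fin n → α} (hb : b ∈ S)
    (hp : insertRank b f p = p) (hlast : ∀ i ∈ sortFixed S f, i.castSucc < p) :
    p = (insertRank b f).gfp := by
  refine ((insertRank b f).le_gfp hp.ge).eq_of_not_lt fun hlt => ?_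
  obtain ⟨i, rfl⟩ : ∃ i : Fin n, i.castSucc = p :=
    Fin.exists_castSucc_eq.2 (hlt.trans_le (Fin.le_last _)).ne
  have hlow := antitone_insertRank_sub b f (Fin.castSucc_lt_iff_succ_le.1 hlt)
  have hsucc := val_insertRank_succ b f i
  simp only [OrderHom.map_gfp] at hlow
  rw [hp] at hsucc
  have hfi : f i = b := by
    by_contra hne
    simp only [hne, if_false, Fin.val_castSucc] at hsucc
    simp only [hsucc, Fin.val_succ] at hlow
    omega
  subst hfi
  refine (hlast i (mem_sortFixed_iff_symm.2 ⟨Fin.ext ?_, hb⟩)).ne rfl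
  rw [← val_insertRank_castSucc_self, hp, Fin.val_castSucc]

lemma isGreatest_sortFixed_insertNth_iff {p : Fin (n + 1)} {b : α} {f : Fin n → α} :
    IsGreatest (sortFixed S (p.insertNth (α := fun _ => α) b f) : Set (Fin (n + 1))) p ↔
      b ∈ S ∧ (∀ i ∈ sortFixed S f, f i ≤ b) ∧ p = (insertRank b f).gfp := by
  constructor
  · rintro ⟨hmem, hgreatest⟩
    obtain ⟨hp, hb⟩ := self_mem_sortFixed_insertNth.1 hmem
    have hle {i} (hi : i ∈ sortFixed S f) : p.succAbove i ≤ p :=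
      hgreatest ((succAbove_mem_sortFixed_insertNth hp i).2 hi)
    refine ⟨hb, fun i hi => ?_, eq_gfp_insertRank hb hp fun i hi => ?_⟩
    · simpa using apply_le_apply_of_mem_sortFixed
        ((succAbove_mem_sortFixed_insertNth hp i).2 hi) hmem (hle hi)
    · exact (p.succAbove_lt_iff_castSucc_lt i).1 ((hle hi).lt_of_ne (p.succAbove_ne i))
  · rintro ⟨hb, hle, rfl⟩
    have hp := (insertRank b f).map_gfp
    refine ⟨self_mem_sortFixed_insertNth.2 ⟨hp, hb⟩, fun x hx => ?_⟩
    rcases Fin.eq_self_or_eq_succAbove (insertRank b f).gfp x with rfl | ⟨i, rfl⟩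
    · exact le_rfl
    have hi := (succAbove_mem_sortFixed_insertNth hp i).1 (mem_coe.1 hx)
    have hlt := sort_symm_lt_insertRank_succ (hle i hi)
    rw [(mem_sortFixed_iff_symm.1 hi).1] at hlt
    refine ((Fin.succAbove_lt_iff_castSucc_lt _ i).2 ?_).le
    exact Fin.castSucc_lt_iff_succ_le.2 ((insertRank b f).le_gfp (Fin.le_def.2 hlt))

end StableSort

/-! ### Words by number of fixed points -/

section Words

variable {α : Type*}

lemma tsum_snoc {n : ℕ} (F : (Fin (n + 1) → α) → ℝ≥0∞) :
    ∑' f, F f = ∑' a, ∑' g : Fin n → α, F (Fin.snoc (α := fun _ => α) g a) := by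
  rw [← ENNReal.tsum_prod, ← (Fin.snocEquiv fun _ => α).tsum_eq]
  rfl

lemma tsum_pi_prod (w : α → ℝ≥0∞) (n : ℕ) :
    ∑' f : Fin n → α, ∏ i, w (f i) = (∑' a, w a) ^ n := by
  induction n with
  | zero => simp
  | succ n ih =>
    simp [tsum_snoc, Fin.prod_univ_castSucc, ENNReal.tsum_mul_right, ENNReal.tsum_mul_left, ih,
      pow_succ]

variable [LinearOrder α] (w : α → ℝ≥0∞) (S : Set α)

open scoped Classical in
/-- The generating function of the words of length `n` whose stable sorting has `j` fixed points
with letter in `S`, all of them at most `b`. -/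
noncomputable def fixSum (n j : ℕ) (b : α) : ℝ≥0∞ :=
  ∑' f : Fin n → α,
    if #(sortFixed S f) = j ∧ ∀ i ∈ sortFixed S f, f i ≤ b then ∏ i, w (f i) else 0

open scoped Classical in
lemma ite_card_sortFixed_eq_sum {n : ℕ} (j : ℕ) (b : α) (f : Fin n → α) (x : ℝ≥0∞) :
    (if #(sortFixed S f) = j + 1 ∧ ∀ i ∈ sortFixed S f, f i ≤ b then x else 0) =
      ∑ p, if IsGreatest (sortFixed S f : Set (Fin n)) p ∧ #(sortFixed S f) = j + 1 ∧ f p ≤ b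
        then x else 0 := by
  rcases (sortFixed S f).eq_empty_or_nonempty with hempty | hne
  · simp [hempty]
  have hmax := isGreatest_max' _ hne
  have hiff (p : Fin n) :
      IsGreatest (sortFixed S f : Set (Fin n)) p ↔ (sortFixed S f).max' hne = p :=
    ⟨hmax.unique, fun h => h ▸ hmax⟩
  simp only [hiff, ite_and, sum_ite_eq, mem_univ, if_true]
  have hle : (∀ i ∈ sortFixed S f, f i ≤ b) ↔ f ((sortFixed S f).max' hne) ≤ b :=
    ⟨fun h => h _ hmax.1, fun h i hi =>
      (apply_le_apply_of_mem_sortFixed hi hmax.1 (hmax.2 hi)).trans h⟩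
  simp only [hle]

lemma isGreatest_insertNth_and_card_iff {n j : ℕ} {b c : α} {p : Fin (n + 1)} {f : Fin n → α} :
    letI g : Fin (n + 1) → α := p.insertNth (α := fun _ => α) c f
    (IsGreatest (sortFixed S g : Set (Fin (n + 1))) p ∧ #(sortFixed S g) = j + 1 ∧ g p ≤ b) ↔
      p = (insertRank c f).gfp ∧ (c ∈ S ∧ c ≤ b) ∧
        #(sortFixed S f) = j ∧ ∀ i ∈ sortFixed S f, f i ≤ c := by
  have hcard (h : IsGreatest (sortFixed S (p.insertNth (α := fun _ => α) c f) : Set _) p) :=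
    card_sortFixed_insertNth h.1
  rw [Fin.insertNth_apply_same]
  have := isGreatest_sortFixed_insertNth_iff (S := S) (p := p) (b := c) (f := f)
  grind

open scoped Classical in
lemma fixSum_succ (n j : ℕ) (b : α) :
    fixSum w S (n + 1) (j + 1) b =
      ∑' c, if c ∈ S ∧ c ≤ b then w c * fixSum w S n j c else 0 := by
  let F (c : α) (f : Fin n → α) : ℝ≥0∞ :=
    if (c ∈ S ∧ c ≤ b) ∧ #(sortFixed S f) = j ∧ ∀ i ∈ sortFixed S f, f i ≤ c then
      w c * ∏ i, w (f i) else 0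
  calc fixSum w S (n + 1) (j + 1) b
    _ = ∑ p, ∑' g : Fin (n + 1) → α, if IsGreatest (sortFixed S g : Set (Fin (n + 1))) p ∧
          #(sortFixed S g) = j + 1 ∧ g p ≤ b then ∏ i, w (g i) else 0 := by
      simp only [fixSum, ite_card_sortFixed_eq_sum]
      exact Summable.tsum_finsetSum fun _ _ => ENNReal.summable
    _ = ∑ p, ∑' c, ∑' f : Fin n → α, if p = (insertRank c f).gfp then F c f else 0 := by
      refine sum_congr rfl fun p _ => ?_
      rw [← (Fin.insertNthEquiv (fun _ => α) p).tsum_eq, ENNReal.tsum_prod']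
      refine tsum_congr fun c => tsum_congr fun f => ?_
      rw [← ite_and]
      exact if_congr (isGreatest_insertNth_and_card_iff S)
        (by simp [Fin.insertNthEquiv, Fin.prod_univ_succAbove _ p]) rfl
    _ = ∑' c, ∑' f : Fin n → α, F c f := by
      rw [← Summable.tsum_finsetSum fun _ _ => ENNReal.summable]
      refine tsum_congr fun c => ?_
      rw [← Summable.tsum_finsetSum fun _ _ => ENNReal.summable]
      simp
    _ = ∑' c, if c ∈ S ∧ c ≤ b then w c * fixSum w S n j c else 0 := by
      refine tsum_congr fun c => ?_
      by_cases hc : c ∈ S ∧ c ≤ b <;> simp [F, hc, fixSum, ← ENNReal.tsum_mul_left]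

end Words

/-! ### Decreasing sequences with prescribed drops -/

section Drops

/-- The inverse `1 / (Q; Q)_j` of the `q`-Pochhammer symbol. Subtraction and inversion are plain
operations so that the definition makes sense both in `ℝ≥0∞` and in a field. -/
def invQPochhammer {K : Type*} [CommSemiring K] [Sub K] [Inv K] (Q : K) (j : ℕ) : K :=
  ∏ i ∈ range j, (1 - Q ^ (i + 1))⁻¹

lemma invQPochhammer_succ {K : Type*} [CommSemiring K] [Sub K] [Inv K] (Q : K) (j : ℕ) :
    invQPochhammer Q (j + 1) = invQPochhammer Q j * (1 - Q ^ (j + 1))⁻¹ :=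
  prod_range_succ _ j

lemma tsum_ite_le (F : ℕ → ℝ≥0∞) (V : ℕ) :
    (∑' m, if V ≤ m then F m else 0) = ∑' m, F (V + m) := by
  refine (Function.Injective.tsum_eq (add_right_injective V) ?_).symm.trans (by simp)
  intro m hm
  obtain ⟨d, rfl⟩ := Nat.exists_eq_add_of_le (not_not.1 fun h => hm (if_neg h))
  exact ⟨d, rfl⟩

lemma tsum_ite_le_pow (Q : ℝ≥0∞) (V n : ℕ) :
    (∑' m, if V ≤ m then Q ^ m * Q ^ (n * m) else 0) =
      Q ^ ((n + 1) * V) * (1 - Q ^ (n + 1))⁻¹ := by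
  have hpow (m : ℕ) : Q ^ (V + m) * Q ^ (n * (V + m)) = Q ^ ((n + 1) * V) * (Q ^ (n + 1)) ^ m := by
    ring
  simp_rw [tsum_ite_le, hpow, ENNReal.tsum_mul_left, ENNReal.tsum_geometric]

variable {n : ℕ}

/-- The sequence `lam`, continued by the value `V`, decreases by at least `δ i` in its `i`-th
step. -/
def DropsBy (δ : ℕ → ℕ) (V : ℕ) (lam : Fin n → ℕ) : Prop :=
  ∀ i : Fin n, Fin.snoc (α := fun _ => ℕ) lam V i.succ + δ i ≤ lam i

lemma dropsBy_snoc {δ : ℕ → ℕ} {V m : ℕ} {lam : Fin n → ℕ} :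
    DropsBy δ V (Fin.snoc (α := fun _ => ℕ) lam m : Fin (n + 1) → ℕ) ↔
      V + δ n ≤ m ∧ DropsBy δ m lam := by
  simp [DropsBy, Fin.forall_fin_succ', ← Fin.castSucc_succ, and_comm]

open scoped Classical in
lemma tsum_dropsBy (Q : ℝ≥0∞) (δ : ℕ → ℕ) (n V : ℕ) :
    (∑' lam : Fin n → ℕ, if DropsBy δ V lam then Q ^ (∑ i, lam i) else 0) =
      Q ^ (n * V) * Q ^ (∑ i ∈ range n, (i + 1) * δ i) * invQPochhammer Q n := by
  induction n generalizing V with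
  | zero => simp [DropsBy, invQPochhammer]
  | succ n ih =>
    have hlast (m : ℕ) : (∑' lam : Fin n → ℕ,
        if DropsBy δ V (Fin.snoc (α := fun _ => ℕ) lam m : Fin (n + 1) → ℕ) then
          Q ^ (∑ i, (Fin.snoc (α := fun _ => ℕ) lam m : Fin (n + 1) → ℕ) i) else 0) =
        (if V + δ n ≤ m then Q ^ m * Q ^ (n * m) else 0) *
          (Q ^ (∑ i ∈ range n, (i + 1) * δ i) * invQPochhammer Q n) := by
      by_cases hm : V + δ n ≤ m
      · rw [if_pos hm, mul_assoc, ← mul_assoc (Q ^ (n * m)), ← ih, ← ENNReal.tsum_mul_left]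
        refine tsum_congr fun lam => ?_
        simp only [dropsBy_snoc, hm, true_and, Fin.sum_univ_castSucc, Fin.snoc_castSucc,
          Fin.snoc_last, mul_ite, mul_zero, pow_add, mul_comm]
      · simp [dropsBy_snoc, hm]
    rw [tsum_snoc, tsum_congr hlast, ENNReal.tsum_mul_right, tsum_ite_le_pow, sum_range_succ]
    simp only [invQPochhammer_succ, pow_add, mul_add]
    ring

end Drops

/-! ### Colored permutations as sorted words -/

section Letters

variable {ℓ n : ℕ}

/-- The letters of the words enumerated below: pairs of a part and a color, ordered so that the
stable sorting of a word lists its letters with decreasing parts, and with decreasing color indices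
among equal parts. -/
abbrev Letter (ℓ : ℕ) := (ℕ ×ₗ Fin ℓ)ᵒᵈ

namespace Letter

/-- The identification of letters with pairs of a part and a color. -/
def equivProd : ℕ × Fin ℓ ≃ Letter ℓ := toLex.trans OrderDual.toDual

/-- The part of a letter. -/
def part (a : Letter ℓ) : ℕ := (equivProd.symm a).1

/-- The color index of a letter. -/
def color (a : Letter ℓ) : Fin ℓ := (equivProd.symm a).2

/-- The weight of a letter in a generating function in `q`. -/
noncomputable def weight (q : ℝ≥0∞) (a : Letter ℓ) : ℝ≥0∞ := q ^ (ℓ * a.part + a.color)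

@[simp] lemma part_equivProd (x : ℕ × Fin ℓ) : (equivProd x).part = x.1 := rfl

@[simp] lemma color_equivProd (x : ℕ × Fin ℓ) : (equivProd x).color = x.2 := rfl

@[simp] lemma equivProd_part_color (a : Letter ℓ) : equivProd (a.part, a.color) = a := rfl

lemma lt_iff {a b : Letter ℓ} :
    a < b ↔ b.part < a.part ∨ b.part = a.part ∧ b.color < a.color :=
  Prod.Lex.lt_iff

lemma equivProd_le_equivProd_zero [NeZero ℓ] {v V : ℕ} {c : Fin ℓ} :
    equivProd (v, c) ≤ equivProd (V, 0) ↔ V ≤ v := by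
  rw [← not_lt, lt_iff]
  simp

lemma tsum_weight [NeZero ℓ] (q : ℝ≥0∞) : ∑' a : Letter ℓ, a.weight q = (1 - q)⁻¹ := by
  rw [← ENNReal.tsum_geometric, ← ((Nat.divModEquiv ℓ).trans equivProd).tsum_eq]
  refine tsum_congr fun m => ?_
  simp [weight, Nat.div_add_mod]

end Letter

open Letter

/-- The colored permutation obtained by sorting the word `f` stably: its absolute values are the
positions of the letters of `f` in sorted order, and its colors are those of these letters. -/
def standardization (f : Fin n → Letter ℓ) : CP ℓ n :=
  (Tuple.sort f, fun i => (f (Tuple.sort f i)).color)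

/-- The word whose letter at position `x.1 i` has part `lam i` and color `x.2 i`. It is the only
word with sorted parts `lam` whose standardization may be `x`. -/
def wordOf (x : CP ℓ n) (lam : Fin n → ℕ) : Fin n → Letter ℓ := fun i =>
  equivProd (lam (x.1.symm i), x.2 (x.1.symm i))

lemma fix_standardization (f : Fin n → Letter ℓ) :
    CP.fix (standardization f) = #(sortFixed {a | (a.color : ℕ) = 0} f) := by
  rw [CP.fix, CP.fixSet]
  congr 1
  ext i
  rw [mem_filter_univ, mem_sortFixed]
  exact and_congr_right fun h : Tuple.sort f i = i => by simp [standardization, h]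

lemma wordOf_injective (x : CP ℓ n) : Function.Injective (wordOf x) := fun lam lam' h =>
  funext fun i => by simpa [wordOf] using congrArg part (congrFun h (x.1 i))

lemma mem_range_wordOf_of_standardization_eq {f : Fin n → Letter ℓ} {x : CP ℓ n}
    (h : standardization f = x) : f ∈ Set.range (wordOf x) := by
  subst h
  exact ⟨fun i => (f (Tuple.sort f i)).part, funext fun i => by simp [wordOf, standardization]⟩

lemma prod_weight_wordOf (q : ℝ≥0∞) (x : CP ℓ n) (lam : Fin n → ℕ) :
    ∏ i, (wordOf x lam i).weight q = q ^ CP.col x * (q ^ ℓ) ^ (∑ i, lam i) := by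
  rw [← Equiv.prod_comp x.1]
  simp [wordOf, weight, pow_add, pow_mul, prod_mul_distrib, prod_pow_eq_pow_sum, CP.col, mul_comm]

lemma standardization_wordOf_eq_iff_strictMono {x : CP ℓ n} {lam : Fin n → ℕ} :
    standardization (wordOf x lam) = x ↔
      StrictMono fun k => toLex (equivProd (lam k, x.2 k), x.1 k) := by
  have hword (k : Fin n) : wordOf x lam (x.1 k) = equivProd (lam k, x.2 k) := by simp [wordOf]
  have hsort : standardization (wordOf x lam) = x ↔ Tuple.sort (wordOf x lam) = x.1 := by
    refine ⟨congrArg Prod.fst, fun h => Prod.ext h (funext fun k => ?_)⟩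
    simp [standardization, h, hword]
  simp only [hsort, sort_eq_iff_strictMono, hword]

/-- The indicator function of the descents of a colored permutation. -/
def desIndicator (x : CP ℓ n) (i : ℕ) : ℕ := if i ∈ CP.desSet x then 1 else 0

lemma mem_desSet_iff {x : CP ℓ (n + 1)} {i : Fin n} :
    (i : ℕ) ∈ CP.desSet x ↔ x.2 i.castSucc < x.2 i.succ ∨
      x.2 i.castSucc = x.2 i.succ ∧ x.1 i.succ < x.1 i.castSucc := by
  have hsucc : (⟨i + 1, by omega⟩ : Fin (n + 1)) = i.succ := rfl
  have hcast : (⟨i, by omega⟩ : Fin (n + 1)) = i.castSucc := rfl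
  simp [CP.desSet, CP.gtLetter, CP.letter, hsucc, hcast, Fin.ext_iff]

lemma standardization_wordOf_eq_iff_dropsBy {x : CP ℓ n} {lam : Fin n → ℕ} :
    standardization (wordOf x lam) = x ↔ DropsBy (desIndicator x) 0 lam := by
  rw [standardization_wordOf_eq_iff_strictMono]
  cases n with
  | zero => simp [DropsBy, Subsingleton.strictMono]
  | succ n =>
    have hlast : n ∉ CP.desSet x := by simp [CP.desSet]
    rw [Fin.strictMono_iff_lt_succ, DropsBy, Fin.forall_fin_succ']
    simp only [Fin.val_last, Fin.succ_last, Fin.snoc_last, desIndicator, hlast, if_false, zero_le,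
      Nat.add_zero, and_true, Fin.val_castSucc, Fin.succ_castSucc, Fin.snoc_castSucc,
      mem_desSet_iff, Prod.Lex.toLex_lt_toLex, lt_iff, part_equivProd, color_equivProd,
      equivProd.injective.eq_iff, Prod.mk.injEq]
    refine forall_congr' fun i => ?_
    have hne : x.1 i.castSucc ≠ x.1 i.succ := x.1.injective.ne i.castSucc_lt_succ.ne
    grind

lemma sum_succ_mul_desIndicator (x : CP ℓ n) :
    ∑ i ∈ range n, (i + 1) * desIndicator x i = CP.maj x := by
  have hdes : {i ∈ range n | i ∈ CP.desSet x} = CP.desSet x := by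
    rw [filter_mem_eq_inter, inter_eq_right]
    exact (filter_subset _ _).trans (range_mono n.pred_le)
  simp only [desIndicator, mul_ite, mul_one, mul_zero, ← sum_filter, hdes, CP.maj]

lemma tsum_standardization_eq (q : ℝ≥0∞) (x : CP ℓ n) :
    (∑' f : Fin n → Letter ℓ, if standardization f = x then ∏ i, (f i).weight q else 0) =
      q ^ CP.fmaj x * invQPochhammer (q ^ ℓ) n := by
  classical
  rw [← (wordOf_injective x).tsum_eq fun f hf =>
    mem_range_wordOf_of_standardization_eq (not_not.1 fun h => hf (if_neg h))]
  simp_rw [prod_weight_wordOf, standardization_wordOf_eq_iff_dropsBy, ← mul_ite_zero,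
    ENNReal.tsum_mul_left]
  rw [tsum_dropsBy, sum_succ_mul_desIndicator, CP.fmaj]
  ring

/-- The colored `q`-derangement number, for `q` in any commutative semiring. -/
def derangementSum {R : Type*} [CommSemiring R] (ℓ : ℕ) (q : R) (n : ℕ) : R :=
  ∑ σ ∈ (univ : Finset (CP ℓ n)).filter fun σ => CP.fix σ = 0, q ^ CP.fmaj σ

/-- The generating function of the words with letters in `Letter ℓ` and `j` fixed points of color
`0`, all of them with part at least `V`. -/
noncomputable def letterFixSum (ℓ : ℕ) [NeZero ℓ] (q : ℝ≥0∞) (n j V : ℕ) : ℝ≥0∞ :=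
  fixSum (weight q) {a : Letter ℓ | (a.color : ℕ) = 0} n j (equivProd (V, 0))

variable [NeZero ℓ] (q : ℝ≥0∞)

lemma letterFixSum_zero (n V : ℕ) :
    letterFixSum ℓ q n 0 V = derangementSum ℓ q n * invQPochhammer (q ^ ℓ) n := by
  classical
  simp_rw [derangementSum, sum_mul, ← tsum_standardization_eq]
  rw [← Summable.tsum_finsetSum fun _ _ => ENNReal.summable]
  refine tsum_congr fun f => ?_
  rw [sum_ite_eq]
  refine if_congr ?_ rfl rfl
  rw [mem_filter_univ, fix_standardization, card_eq_zero]
  exact and_iff_left_of_imp fun h i hi => absurd hi (h ▸ notMem_empty i)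

lemma letterFixSum_succ (n j V : ℕ) :
    letterFixSum ℓ q (n + 1) (j + 1) V =
      ∑' v, if V ≤ v then q ^ (ℓ * v) * letterFixSum ℓ q n j v else 0 := by
  rw [letterFixSum, fixSum_succ, ← equivProd.tsum_eq, ENNReal.tsum_prod']
  refine tsum_congr fun v => ?_
  rw [tsum_fintype, sum_eq_single 0]
  · simp [equivProd_le_equivProd_zero, letterFixSum, weight]
  · intro c _ hc
    simp [hc]
  · simp

lemma letterFixSum_add (k j V : ℕ) :
    letterFixSum ℓ q (k + j) j V = derangementSum ℓ q k * invQPochhammer (q ^ ℓ) k *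
      ((q ^ ℓ) ^ (j * V) * invQPochhammer (q ^ ℓ) j) := by
  induction j generalizing V with
  | zero => simp [letterFixSum_zero, invQPochhammer]
  | succ j ih =>
    have hterm (v : ℕ) : (if V ≤ v then q ^ (ℓ * v) * letterFixSum ℓ q (k + j) j v else 0) =
        (if V ≤ v then (q ^ ℓ) ^ v * (q ^ ℓ) ^ (j * v) else 0) *
          (derangementSum ℓ q k * invQPochhammer (q ^ ℓ) k * invQPochhammer (q ^ ℓ) j) := by
      rw [ih, ite_mul, zero_mul]
      ring_nf
    rw [← add_assoc, letterFixSum_succ, tsum_congr hterm, ENNReal.tsum_mul_right, tsum_ite_le_pow,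
      invQPochhammer_succ]
    ring

lemma sum_letterFixSum (n : ℕ) :
    ∑ j ∈ range (n + 1), letterFixSum ℓ q n j 0 = (1 - q)⁻¹ ^ n := by
  simp only [letterFixSum, fixSum]
  rw [← tsum_weight (ℓ := ℓ), ← tsum_pi_prod, ← Summable.tsum_finsetSum fun _ _ => ENNReal.summable]
  refine tsum_congr fun f => ?_
  have hle (i : Fin n) : f i ≤ equivProd (0, 0) := by
    rw [← equivProd_part_color (f i)]
    exact equivProd_le_equivProd_zero.2 (Nat.zero_le _)
  have hcard := (card_le_univ (sortFixed {a : Letter ℓ | (a.color : ℕ) = 0} f)).trans_lt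
    ((Fintype.card_fin n).trans_lt n.lt_succ_self)
  simp only [and_iff_left fun i _ => hle i, sum_ite_eq, mem_range, hcard, if_true]

lemma inv_one_sub_pow_eq_sum_derangementSum (n : ℕ) :
    (1 - q)⁻¹ ^ n = ∑ x ∈ antidiagonal n, derangementSum ℓ q x.1 *
      invQPochhammer (q ^ ℓ) x.1 * invQPochhammer (q ^ ℓ) x.2 := by
  rw [← sum_letterFixSum (ℓ := ℓ), ← Finset.Nat.sum_antidiagonal_swap,
    Finset.Nat.sum_antidiagonal_eq_sum_range_succ_mk]
  refine sum_congr rfl fun j hj => ?_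
  obtain ⟨k, rfl⟩ := Nat.exists_eq_add_of_le' (Nat.lt_succ_iff.1 (mem_range.1 hj))
  simp [letterFixSum_add]

end Letters

/-! ### Euler inversion -/

section Inversion

variable {K : Type*} [Field K] {Q : K}

lemma invQPochhammer_ne_zero (hQ : ∀ m, Q ^ (m + 1) ≠ 1) (j : ℕ) : invQPochhammer Q j ≠ 0 :=
  prod_ne_zero_iff.2 fun i _ => inv_ne_zero (sub_ne_zero.2 (hQ i).symm)

lemma one_sub_mul_invQPochhammer_succ (hQ : ∀ m, Q ^ (m + 1) ≠ 1) (j : ℕ) :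
    (1 - Q ^ (j + 1)) * invQPochhammer Q (j + 1) = invQPochhammer Q j := by
  rw [invQPochhammer_succ, mul_comm, inv_mul_cancel_right₀ (sub_ne_zero.2 (hQ j).symm)]

open PowerSeries

lemma eq_C_of_rescale_eq_self (hQ : ∀ m, Q ^ (m + 1) ≠ 1) {f : K⟦X⟧} (hf : rescale Q f = f) :
    f = C (constantCoeff f) := by
  ext m
  cases m with
  | zero => simp
  | succ m =>
    have h := congrArg (coeff (m + 1)) hf
    rw [coeff_rescale] at h
    rw [coeff_C, if_neg m.succ_ne_zero]
    exact (mul_left_eq_self₀.1 h).resolve_left (hQ m)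

lemma rescale_mk_invQPochhammer (hQ : ∀ m, Q ^ (m + 1) ≠ 1) :
    rescale Q (PowerSeries.mk (invQPochhammer Q)) =
      (1 - X) * PowerSeries.mk (invQPochhammer Q) := by
  ext m
  cases m with
  | zero => simp
  | succ m =>
    rw [coeff_rescale, sub_mul, one_mul, map_sub, coeff_succ_X_mul, coeff_mk, coeff_mk,
      ← one_sub_mul_invQPochhammer_succ hQ m]
    ring

/-- Euler's power series `∑ (-1)^k Q^(k choose 2) X^k / (Q; Q)_k`. -/
noncomputable def eulerSeries (Q : K) : K⟦X⟧ :=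
  PowerSeries.mk fun k => (-1) ^ k * Q ^ k.choose 2 * invQPochhammer Q k

lemma eulerSeries_eq_one_sub_X_mul_rescale (hQ : ∀ m, Q ^ (m + 1) ≠ 1) :
    eulerSeries Q = (1 - X) * rescale Q (eulerSeries Q) := by
  ext m
  cases m with
  | zero =>
    rw [sub_mul, one_mul, map_sub, coeff_zero_X_mul, coeff_rescale, pow_zero, one_mul, sub_zero]
  | succ m =>
    rw [sub_mul, one_mul, map_sub, coeff_succ_X_mul, coeff_rescale, coeff_rescale, eulerSeries,
      coeff_mk, coeff_mk, ← one_sub_mul_invQPochhammer_succ hQ m, Nat.choose_succ_succ' m 1,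
      Nat.choose_one_right]
    ring

lemma eulerSeries_mul_mk_invQPochhammer (hQ : ∀ m, Q ^ (m + 1) ≠ 1) :
    eulerSeries Q * PowerSeries.mk (invQPochhammer Q) = 1 := by
  have hinvariant : rescale Q (eulerSeries Q * PowerSeries.mk (invQPochhammer Q)) =
      eulerSeries Q * PowerSeries.mk (invQPochhammer Q) := by
    conv_rhs => rw [eulerSeries_eq_one_sub_X_mul_rescale hQ]
    rw [map_mul, rescale_mk_invQPochhammer hQ]
    ring
  rw [eq_C_of_rescale_eq_self hQ hinvariant, map_mul]
  simp [eulerSeries, invQPochhammer]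

lemma eq_sum_antidiagonal_of_sum_antidiagonal_invQPochhammer (hQ : ∀ m, Q ^ (m + 1) ≠ 1)
    {a b : ℕ → K} (h : ∀ n, b n = ∑ x ∈ antidiagonal n, a x.1 * invQPochhammer Q x.2) (n : ℕ) :
    a n = ∑ x ∈ antidiagonal n,
      (-1) ^ x.1 * Q ^ x.1.choose 2 * invQPochhammer Q x.1 * b x.2 := by
  have hmk : PowerSeries.mk b = PowerSeries.mk a * PowerSeries.mk (invQPochhammer Q) := by
    ext m
    simp only [coeff_mul, coeff_mk, h m]
  have hinv : eulerSeries Q * PowerSeries.mk b = PowerSeries.mk a := by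
    rw [hmk, mul_left_comm, eulerSeries_mul_mk_invQPochhammer hQ, mul_one]
  simpa only [coeff_mul, eulerSeries, coeff_mk, eq_comm] using congrArg (coeff n) hinv

lemma inv_one_sub_pow_mul_invQPochhammer {q : K} {ℓ : ℕ} (hq : ∀ m, (q ^ ℓ) ^ (m + 1) ≠ 1)
    (k m : ℕ) :
    invQPochhammer (q ^ ℓ) k * (1 - q)⁻¹ ^ m =
      (∏ j ∈ Icc (k + 1) (k + m), qint q (j * ℓ)) * invQPochhammer (q ^ ℓ) (k + m) := by
  induction m with
  | zero => simp
  | succ m ih =>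
    have hgeom : qint q ((k + m + 1) * ℓ) * (1 - q) = 1 - (q ^ ℓ) ^ (k + m + 1) := by
      rw [qint, geom_sum_mul_neg, ← pow_mul, mul_comm]
    have hne : 1 - (q ^ ℓ) ^ (k + m + 1) ≠ 0 := sub_ne_zero.2 (hq (k + m)).symm
    have hratio : (1 - q)⁻¹ = qint q ((k + m + 1) * ℓ) * (1 - (q ^ ℓ) ^ (k + m + 1))⁻¹ := by
      rw [← hgeom] at hne ⊢
      rw [mul_inv, mul_inv_cancel_left₀ (left_ne_zero_of_mul hne)]
    rw [pow_succ, ← mul_assoc, ih, ← add_assoc, prod_Icc_succ_top (by omega), invQPochhammer_succ,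
      hratio]
    ring

end Inversion

/-! ### The formula at real arguments -/

section Real

variable {ℓ : ℕ} {q : ℝ}

lemma ofReal_inv_one_sub (h0 : 0 ≤ q) (h1 : q < 1) :
    ENNReal.ofReal (1 - q)⁻¹ = (1 - ENNReal.ofReal q)⁻¹ := by
  rw [ENNReal.ofReal_inv_of_pos (sub_pos.2 h1), ENNReal.ofReal_sub _ h0, ENNReal.ofReal_one]

lemma invQPochhammer_nonneg (h0 : 0 ≤ q) (h1 : q < 1) (j : ℕ) : 0 ≤ invQPochhammer q j :=
  prod_nonneg fun _ _ => inv_nonneg.2 (sub_nonneg.2 (pow_le_one₀ h0 h1.le))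

lemma ofReal_invQPochhammer (h0 : 0 ≤ q) (h1 : q < 1) (j : ℕ) :
    ENNReal.ofReal (invQPochhammer q j) = invQPochhammer (ENNReal.ofReal q) j := by
  induction j with
  | zero => simp [invQPochhammer]
  | succ j ih =>
    rw [invQPochhammer_succ, invQPochhammer_succ,
      ENNReal.ofReal_mul (invQPochhammer_nonneg h0 h1 j), ih,
      ofReal_inv_one_sub (pow_nonneg h0 _) (pow_lt_one₀ h0 h1 j.succ_ne_zero),
      ENNReal.ofReal_pow h0]

lemma derangementSum_nonneg (h0 : 0 ≤ q) (n : ℕ) : 0 ≤ derangementSum ℓ q n :=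
  sum_nonneg fun _ _ => pow_nonneg h0 _

lemma ofReal_derangementSum (h0 : 0 ≤ q) (n : ℕ) :
    ENNReal.ofReal (derangementSum ℓ q n) = derangementSum ℓ (ENNReal.ofReal q) n := by
  simp only [derangementSum, ENNReal.ofReal_sum_of_nonneg fun _ _ => pow_nonneg h0 _,
    ENNReal.ofReal_pow h0]

lemma real_inv_one_sub_pow_eq_sum_derangementSum [NeZero ℓ] (h0 : 0 ≤ q) (h1 : q < 1) (n : ℕ) :
    (1 - q)⁻¹ ^ n = ∑ x ∈ antidiagonal n, derangementSum ℓ q x.1 *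
      invQPochhammer (q ^ ℓ) x.1 * invQPochhammer (q ^ ℓ) x.2 := by
  have hQ0 : 0 ≤ q ^ ℓ := pow_nonneg h0 ℓ
  have hQ1 : q ^ ℓ < 1 := pow_lt_one₀ h0 h1 (NeZero.ne ℓ)
  have hinv : 0 ≤ (1 - q)⁻¹ := inv_nonneg.2 (sub_nonneg.2 h1.le)
  have hleft (k : ℕ) : 0 ≤ derangementSum ℓ q k * invQPochhammer (q ^ ℓ) k :=
    mul_nonneg (derangementSum_nonneg h0 k) (invQPochhammer_nonneg hQ0 hQ1 k)
  have hterm (x : ℕ × ℕ) : 0 ≤ derangementSum ℓ q x.1 *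
      invQPochhammer (q ^ ℓ) x.1 * invQPochhammer (q ^ ℓ) x.2 :=
    mul_nonneg (hleft x.1) (invQPochhammer_nonneg hQ0 hQ1 x.2)
  rw [← ENNReal.ofReal_eq_ofReal_iff (pow_nonneg hinv n) (sum_nonneg fun x _ => hterm x),
    ENNReal.ofReal_pow hinv, ofReal_inv_one_sub h0 h1,
    inv_one_sub_pow_eq_sum_derangementSum (ℓ := ℓ), ENNReal.ofReal_sum_of_nonneg fun x _ => hterm x]
  refine sum_congr rfl fun x _ => ?_
  rw [ENNReal.ofReal_mul (hleft x.1), ENNReal.ofReal_mul (derangementSum_nonneg h0 x.1),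
    ofReal_derangementSum h0, ofReal_invQPochhammer hQ0 hQ1, ofReal_invQPochhammer hQ0 hQ1,
    ENNReal.ofReal_pow h0]

lemma derangementSum_eq_of_mem_Ico [NeZero ℓ] (hq : q ∈ Set.Ico 0 1) (n : ℕ) :
    derangementSum ℓ q n = ∑ k ∈ range (n + 1), (-1) ^ k * q ^ (ℓ * k.choose 2) *
      ∏ j ∈ Icc (k + 1) n, qint q (j * ℓ) := by
  have hpow (m : ℕ) : (q ^ ℓ) ^ (m + 1) ≠ 1 :=
    (pow_lt_one₀ (pow_nonneg hq.1 ℓ) (pow_lt_one₀ hq.1 hq.2 (NeZero.ne ℓ)) m.succ_ne_zero).ne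
  refine mul_right_cancel₀ (invQPochhammer_ne_zero hpow n) ?_
  refine (eq_sum_antidiagonal_of_sum_antidiagonal_invQPochhammer
    (a := fun k => derangementSum ℓ q k * invQPochhammer (q ^ ℓ) k) hpow
    (real_inv_one_sub_pow_eq_sum_derangementSum hq.1 hq.2) n).trans ?_
  rw [Finset.Nat.sum_antidiagonal_eq_sum_range_succ_mk, sum_mul]
  refine sum_congr rfl fun k hk => ?_
  obtain ⟨m, rfl⟩ := Nat.exists_eq_add_of_le (mem_range_succ_iff.1 hk)
  rw [Nat.add_sub_cancel_left, mul_assoc, inv_one_sub_pow_mul_invQPochhammer hpow, pow_mul,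
    ← mul_assoc]

end Real

end QDerangement

open Polynomial in
/-- Explicit formula for the colored q-derangement numbers
`d_{ℓ,n}(q) = Σ_{σ ∈ D_{ℓ,n}} q^{fmaj σ}
            = Σ_{k=0}^n (−1)^k q^{ℓ·C(k,2)} [(k+1)ℓ]_q ⋯ [nℓ]_q`. -/
theorem colored_q_derangement_formula (ℓ n : ℕ) (hℓ : 1 ≤ ℓ) :
    (∑ σ ∈ (univ : Finset (CP ℓ n)).filter fun σ => CP.fix σ = 0,
        (X : Polynomial ℤ) ^ CP.fmaj σ) =
      ∑ k ∈ range (n + 1), (-1) ^ k * (X : Polynomial ℤ) ^ (ℓ * k.choose 2) *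
        ∏ j ∈ Icc (k + 1) n, qint (X : Polynomial ℤ) (j * ℓ) := by
  have : NeZero ℓ := ⟨by omega⟩
  apply Polynomial.map_injective (Int.castRingHom ℝ) Int.cast_injective
  refine Polynomial.eq_of_infinite_eval_eq _ _ ((Set.Ico_infinite (zero_lt_one' ℝ)).mono ?_)
  intro q hq
  have h := QDerangement.derangementSum_eq_of_mem_Ico (ℓ := ℓ) hq n
  simp only [QDerangement.derangementSum, qint] at h
  simpa [Polynomial.eval_finsetSum, Polynomial.eval_prod, qint, Polynomial.map_sum,
    Polynomial.map_prod] using h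
end

section
/- Fix an integer ℓ≥1. The colored q-derangement numbers satisfy the recurrence d_{ℓ,n+1}(q) = [ℓ(n+1)]_q · d_{ℓ,n}(q) + (−1)^{n+1} q^{ℓ·binom(n+1,2)} for every n≥0. -/
/-!
Let `d_n` and `A_n` be the generating functions of `fmaj` over the colored derangements and over all
colored permutations. They satisfy

* `A_{n+1} = [ℓ]_q [n+1]_{q^ℓ} A_n`, by inserting the largest absolute value into a word, and
* `A_n = ∑_k [n choose k]_{q^ℓ} d_k`, by inserting fixed points into a derangement.

Both come from one fact about words: when `f` copies of a letter `c` are inserted in all possible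
ways into a word `w` of length `k` in which `c` does not occur, `∑ q^maj` over the results is
`[k+f choose f]_q q^(maj w)`. It applies to fixed points because of the excedance sign. Between
adjacent places, a smaller excedance sign at the right one forces a descent and a larger one forbids
it, so prefixing every letter by its sign does not change `maj`. All fixed points have sign `0`, and
the letters of a derangement have sign `±1`; hence the fixed points can be replaced by copies of a
single letter of sign `0`.

The second relation determines `d` from `A`. The absorption rule for Gaussian binomials and the
`q`-binomial theorem at `x = -1` show that the sequence given by the claimed recurrence satisfies it
as well.
-/

open Finset

/-! ### Gaussian binomial coefficients -/

section GaussianBinomial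

variable {R : Type*} [CommSemiring R] (q : R)

lemma qint_succ (k : ℕ) : qint q (k + 1) = qint q k + q ^ k :=
  sum_range_succ _ _

lemma qint_add (a b : ℕ) : qint q (a + b) = qint q a + q ^ a * qint q b := by
  simp only [qint, sum_range_add, pow_add, mul_sum]

lemma qint_one : qint q 1 = 1 := by
  simp [qint]

lemma qint_succ' (k : ℕ) : qint q (k + 1) = 1 + q * qint q k := by
  rw [add_comm k, qint_add, qint_one, pow_one]

lemma qint_mul (a b : ℕ) : qint q (a * b) = qint q a * qint (q ^ a) b := by
  induction b with
  | zero => simp [qint]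
  | succ b ih => rw [Nat.mul_succ, qint_add, ih, qint_succ, pow_mul]; ring

/-- The Gaussian binomial coefficient `[a + b choose a]_q`, indexed by its two parts `a` and `b` so
that no truncated subtraction occurs in its identities, and defined by the `q`-Pascal rule. -/
def qbinom : ℕ → ℕ → R
  | 0, _ => 1
  | _ + 1, 0 => 1
  | a + 1, b + 1 => qbinom a (b + 1) + q ^ (a + 1) * qbinom (a + 1) b
termination_by a b => a + b

lemma qbinom_zero_left (b : ℕ) : qbinom q 0 b = 1 := by
  rw [qbinom]

lemma qbinom_zero_right (a : ℕ) : qbinom q a 0 = 1 := by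
  cases a <;> rw [qbinom]

lemma qbinom_succ_succ (a b : ℕ) :
    qbinom q (a + 1) (b + 1) = qbinom q a (b + 1) + q ^ (a + 1) * qbinom q (a + 1) b := by
  rw [qbinom]

lemma qbinom_one_left (b : ℕ) : qbinom q 1 b = qint q (b + 1) := by
  induction b with
  | zero => rw [qbinom_zero_right, qint_one]
  | succ b ih =>
    rw [qbinom_succ_succ, qbinom_zero_left, ih, zero_add, pow_one, ← qint_succ']

lemma qbinom_one_right (a : ℕ) : qbinom q a 1 = qint q (a + 1) := by
  induction a with
  | zero => rw [qbinom_zero_left, qint_one]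
  | succ a ih => rw [qbinom_succ_succ, ih, qbinom_zero_right, mul_one, ← qint_succ]

lemma qbinom_succ_succ' (a b : ℕ) :
    qbinom q (a + 1) (b + 1) = qbinom q (a + 1) b + q ^ (b + 1) * qbinom q a (b + 1) := by
  induction a generalizing b with
  | zero => rw [qbinom_one_left, qbinom_one_left, qbinom_zero_left, mul_one, qint_succ]
  | succ a iha =>
    induction b with
    | zero =>
      rw [qbinom_one_right, qbinom_one_right, qbinom_zero_right, zero_add, pow_one, qint_succ']
    | succ b ihb =>
      calc qbinom q (a + 2) (b + 2)
          = (qbinom q (a + 1) (b + 1) + q ^ (b + 2) * qbinom q a (b + 2)) +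
              q ^ (a + 2) * (qbinom q (a + 2) b + q ^ (b + 1) * qbinom q (a + 1) (b + 1)) := by
            rw [qbinom_succ_succ, iha, ihb]
        _ = (qbinom q (a + 1) (b + 1) + q ^ (a + 2) * qbinom q (a + 2) b) +
              q ^ (b + 2) * (qbinom q a (b + 2) + q ^ (a + 1) * qbinom q (a + 1) (b + 1)) := by
            ring
        _ = qbinom q (a + 2) (b + 1) + q ^ (b + 2) * qbinom q (a + 1) (b + 2) := by
            rw [← qbinom_succ_succ, ← qbinom_succ_succ]

lemma qint_mul_qbinom_succ_comm (a b : ℕ) :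
    qint q (a + 1) * qbinom q (a + 1) b = qint q (b + 1) * qbinom q a (b + 1) := by
  induction a generalizing b with
  | zero => rw [qbinom_one_left, qbinom_zero_left, qint_one, one_mul, mul_one]
  | succ a iha =>
    induction b with
    | zero => rw [qbinom_one_right, qbinom_zero_right, qint_one, one_mul, mul_one]
    | succ b ihb =>
      calc qint q (a + 2) * qbinom q (a + 2) (b + 1)
          = qint q (a + 2) * qbinom q (a + 1) (b + 1) +
              q ^ (a + 2) * (qint q (a + 2) * qbinom q (a + 2) b) := by
            rw [qbinom_succ_succ]; ring
        _ = qint q (a + 2 + (b + 1)) * qbinom q (a + 1) (b + 1) := by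
            rw [ihb, qint_add q (a + 2)]; ring
        _ = qint q (a + 1 + (b + 2)) * qbinom q (a + 1) (b + 1) := by congr 2; ring
        _ = qint q (b + 2) * qbinom q a (b + 2) +
              q ^ (a + 1) * (qint q (b + 2) * qbinom q (a + 1) (b + 1)) := by
            rw [qint_add q (a + 1), ← iha]; ring
        _ = qint q (b + 2) * qbinom q (a + 1) (b + 2) := by
            rw [qbinom_succ_succ q a (b + 1)]; ring

lemma qint_mul_qbinom_succ_left (a b : ℕ) :
    qint q (a + 1) * qbinom q (a + 1) b = qint q (a + b + 1) * qbinom q a b := by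
  cases b with
  | zero => rw [qbinom_zero_right, qbinom_zero_right, add_zero]
  | succ b =>
    rw [qbinom_succ_succ, mul_add, mul_left_comm, qint_mul_qbinom_succ_comm,
      show a + (b + 1) + 1 = a + 1 + (b + 1) by ring, qint_add q (a + 1)]
    ring

lemma sum_antidiagonal_succ_mul_qbinom (c : ℕ → R) (n : ℕ) :
    ∑ p ∈ antidiagonal (n + 1), c p.1 * qbinom q p.1 p.2 =
      ∑ p ∈ antidiagonal n, (c (p.1 + 1) + q ^ p.1 * c p.1) * qbinom q p.1 p.2 := by
  simp only [add_mul, sum_add_distrib]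
  cases n with
  | zero => simp [Nat.sum_antidiagonal_succ, qbinom_zero_left, qbinom_zero_right, add_comm]
  | succ n =>
    rw [Nat.sum_antidiagonal_succ, Nat.sum_antidiagonal_succ', Nat.sum_antidiagonal_succ',
      Nat.sum_antidiagonal_succ]
    simp only [qbinom_succ_succ, qbinom_zero_left, qbinom_zero_right, mul_add, sum_add_distrib,
      pow_zero, one_mul, mul_one]
    simp only [mul_left_comm (c _), mul_assoc]
    ring

theorem prod_one_add_pow_mul_eq_sum_qbinom (x : R) (n : ℕ) :
    ∏ i ∈ range n, (1 + q ^ i * x) =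
      ∑ p ∈ antidiagonal n, x ^ p.1 * q ^ p.1.choose 2 * qbinom q p.1 p.2 := by
  induction n generalizing x with
  | zero => simp [qbinom_zero_left]
  | succ n ih =>
    rw [prod_range_succ',
      sum_antidiagonal_succ_mul_qbinom (c := fun k => x ^ k * q ^ k.choose 2)]
    simp only [pow_succ, mul_assoc, pow_zero, one_mul]
    rw [ih, sum_mul]
    refine sum_congr rfl fun p _ => ?_
    rw [Nat.choose_succ_succ' p.1 1, Nat.choose_one_right, mul_pow, pow_add]
    ring

end GaussianBinomial

section Inversion

variable {R : Type*} [CommRing R]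

lemma sum_neg_one_pow_mul_qbinom_eq_zero (q : R) (n : ℕ) :
    ∑ p ∈ antidiagonal (n + 1), (-1) ^ p.1 * q ^ p.1.choose 2 * qbinom q p.1 p.2 = 0 := by
  rw [← prod_one_add_pow_mul_eq_sum_qbinom]
  exact prod_eq_zero (mem_range.mpr n.succ_pos) (by simp)

lemma eq_zero_of_sum_antidiagonal_mul_eq_zero {c : ℕ → ℕ → R} {e : ℕ → R} (hc : ∀ n, c n 0 = 1)
    (h : ∀ n, ∑ p ∈ antidiagonal n, c p.1 p.2 * e p.1 = 0) (n : ℕ) : e n = 0 := by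
  induction n using Nat.strong_induction_on with
  | _ n ih =>
    rw [← h n, sum_eq_single_of_mem (n, 0) (by simp), hc, one_mul]
    intro p hp hne
    have hlt : p.1 < n := by
      rw [HasAntidiagonal.mem_antidiagonal] at hp
      by_contra hn
      exact hne (Prod.ext (by simp only; omega) (by simp only; omega))
    rw [ih p.1 hlt, mul_zero]

/-- The relations `∑ [n choose k]_q d_k = A_n` are triangular, hence determine `d`. -/
lemma recurrence_of_sum_qbinom_mul_eq (q a : R) {d A : ℕ → R} (hA₀ : A 0 = 1)
    (hA : ∀ n, A (n + 1) = a * qint q (n + 1) * A n)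
    (hd : ∀ n, ∑ p ∈ antidiagonal n, qbinom q p.1 p.2 * d p.1 = A n) (n : ℕ) :
    d (n + 1) = a * qint q (n + 1) * d n + (-1) ^ (n + 1) * q ^ (n + 1).choose 2 := by
  have hd₀ : d 0 = 1 := by simpa [qbinom_zero_left, hA₀] using hd 0
  have sum_shift (n : ℕ) :
      ∑ p ∈ antidiagonal n, qbinom q (p.1 + 1) p.2 * d (p.1 + 1) = A (n + 1) - 1 := by
    rw [← hd (n + 1), Nat.sum_antidiagonal_succ, qbinom_zero_left, hd₀]
    ring
  have sum_absorb (n : ℕ) :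
      ∑ p ∈ antidiagonal n, qbinom q (p.1 + 1) p.2 * (a * qint q (p.1 + 1) * d p.1) =
        A (n + 1) := by
    rw [hA, ← hd, mul_sum]
    refine sum_congr rfl fun p hp => ?_
    rw [← HasAntidiagonal.mem_antidiagonal.mp hp]
    linear_combination a * d p.1 * qint_mul_qbinom_succ_left q p.1 p.2
  have sum_sign (n : ℕ) :
      ∑ p ∈ antidiagonal n,
        qbinom q (p.1 + 1) p.2 * ((-1) ^ (p.1 + 1) * q ^ (p.1 + 1).choose 2) = -1 := by
    have h := sum_neg_one_pow_mul_qbinom_eq_zero q n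
    rw [Nat.sum_antidiagonal_succ, qbinom_zero_left] at h
    simp only [mul_comm (qbinom q _ _), eq_neg_iff_add_eq_zero]
    simpa [add_comm] using h
  refine sub_eq_zero.mp (eq_zero_of_sum_antidiagonal_mul_eq_zero
    (c := fun k f => qbinom q (k + 1) f)
    (e := fun n => d (n + 1) -
      (a * qint q (n + 1) * d n + (-1) ^ (n + 1) * q ^ (n + 1).choose 2))
    (fun n => qbinom_zero_right q _) (fun n => ?_) n)
  simp only [mul_sub, mul_add, sum_sub_distrib, sum_add_distrib, sum_shift, sum_sign]
  rw [sum_absorb]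
  ring

end Inversion

/-! ### Places outside a finite set -/

section Places

lemma count_notMem_singleton (p i : ℕ) :
    Nat.count (· ∉ ({p} : Finset ℕ)) i = if i ≤ p then i else i - 1 := by
  induction i with
  | zero => simp
  | succ i ih =>
    rw [Nat.count_succ, ih]
    simp only [mem_singleton]
    split_ifs <;> omega

lemma count_notMem_singleton_succAbove {n : ℕ} (p : Fin (n + 1)) (j : Fin n) :
    Nat.count (· ∉ ({(p : ℕ)} : Finset ℕ)) (p.succAbove j) = j := by
  rw [count_notMem_singleton]
  rcases lt_or_ge j.castSucc p with h | h
  · rw [Fin.succAbove_of_castSucc_lt _ _ h, if_pos (Fin.le_def.mp h.le), Fin.val_castSucc]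
  · have hlt : (p : ℕ) < j + 1 := Nat.lt_succ_of_le h
    rw [Fin.succAbove_of_le_castSucc _ _ h, Fin.val_succ, if_neg hlt.not_ge, Nat.add_sub_cancel]

lemma count_notMem_congr {S T : Finset ℕ} {n : ℕ} (h : ∀ i < n, i ∈ S ↔ i ∈ T) :
    Nat.count (· ∉ S) n = Nat.count (· ∉ T) n := by
  simp only [Nat.count_eq_card_filter_range]
  exact congrArg card (filter_congr fun i hi => not_congr (h i (mem_range.mp hi)))

lemma count_notMem_of_mem_powersetCard {S : Finset ℕ} {k f : ℕ}
    (hS : S ∈ powersetCard f (range (k + f))) : Nat.count (· ∉ S) (k + f) = k := by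
  obtain ⟨hsub, hcard⟩ := mem_powersetCard.mp hS
  rw [Nat.count_eq_card_filter_range, filter_notMem_eq_sdiff, card_sdiff_of_subset hsub, hcard,
    card_range, Nat.add_sub_cancel]

lemma count_notMem_pred_of_mem_powersetCard {S : Finset ℕ} {k f : ℕ}
    (hS : S ∈ powersetCard f (range (k + f))) (hlast : k + f - 1 ∉ S) :
    Nat.count (· ∉ S) (k + f - 1) = k - 1 := by
  have hcount := count_notMem_of_mem_powersetCard hS
  rcases hn : k + f with - | n
  · rw [Nat.count_zero]
    omega
  · rw [hn, Nat.add_sub_cancel] at hlast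
    rw [hn, Nat.count_succ, if_pos hlast] at hcount
    rw [Nat.add_sub_cancel, ← hcount, Nat.add_sub_cancel]

lemma notMem_of_mem_powersetCard_range {S : Finset ℕ} {f n : ℕ}
    (hS : S ∈ powersetCard f (range n)) : n ∉ S :=
  fun h => notMem_range_self ((mem_powersetCard.mp hS).1 h)

lemma sum_powersetCard_range_succ {M : Type*} [AddCommMonoid M] (n f : ℕ) (g : Finset ℕ → M) :
    ∑ S ∈ powersetCard (f + 1) (range (n + 1)), g S =
      ∑ S ∈ powersetCard (f + 1) (range n), g S +
        ∑ S ∈ powersetCard f (range n), g (insert n S) := by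
  rw [range_add_one, powersetCard_succ_insert notMem_range_self, sum_union, sum_image]
  · intro S hS T hT h
    rw [← erase_insert (notMem_of_mem_powersetCard_range hS), h,
      erase_insert (notMem_of_mem_powersetCard_range hT)]
  · refine disjoint_left.mpr fun S hS hS' => notMem_of_mem_powersetCard_range hS ?_
    obtain ⟨T, -, rfl⟩ := mem_image.mp hS'
    exact mem_insert_self n T

variable {S : Finset ℕ} {k f : ℕ}

lemma infinite_notMem (S : Finset ℕ) : (Set.ofPred (· ∉ S)).Infinite :=
  S.finite_toSet.infinite_compl

lemma nth_notMem_strictMono (S : Finset ℕ) : StrictMono (Nat.nth (· ∉ S)) :=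
  Nat.nth_strictMono (infinite_notMem S)

lemma nth_notMem_lt (hS : S ∈ powersetCard f (range (k + f))) {j : ℕ} (hj : j < k) :
    Nat.nth (· ∉ S) j < k + f :=
  Nat.nth_lt_of_lt_count (hj.trans_eq (count_notMem_of_mem_powersetCard hS).symm)

lemma count_notMem_lt (hS : S ∈ powersetCard f (range (k + f))) {i : ℕ} (hi : i < k + f)
    (h : i ∉ S) : Nat.count (· ∉ S) i < k :=
  (Nat.count_strict_mono h hi).trans_eq (count_notMem_of_mem_powersetCard hS)

/-- The increasing bijection from `Fin k` to the `k` places outside `S`. -/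
noncomputable def finEquivNotMem (hS : S ∈ powersetCard f (range (k + f))) :
    Fin k ≃ {i : Fin (k + f) // (i : ℕ) ∉ S} where
  toFun j := ⟨⟨Nat.nth (· ∉ S) j, nth_notMem_lt hS j.2⟩,
    Nat.nth_mem_of_infinite (infinite_notMem S) j⟩
  invFun i := ⟨Nat.count (· ∉ S) i.1, count_notMem_lt hS i.1.2 i.2⟩
  left_inv j := Fin.ext (Nat.count_nth_of_infinite (infinite_notMem S) j)
  right_inv i := Subtype.ext (Fin.ext (Nat.nth_count i.2))

lemma exists_eq_finEquivNotMem (hS : S ∈ powersetCard f (range (k + f))) {i : Fin (k + f)}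
    (hi : (i : ℕ) ∉ S) : ∃ j : Fin k, i = (finEquivNotMem hS j).1 :=
  ⟨(finEquivNotMem hS).symm ⟨i, hi⟩, by simp⟩

end Places

/-! ### Inserting copies of a new letter into a word -/

section Words

variable {α : Type*}

/-- The word obtained from `w` by inserting copies of the letter `c` so that they occupy the
places in `S`. -/
def insertLetter (S : Finset ℕ) (c : α) (w : ℕ → α) (i : ℕ) : α :=
  if i ∈ S then c else w (Nat.count (· ∉ S) i)

lemma insertLetter_of_mem {S : Finset ℕ} {i : ℕ} (hi : i ∈ S) (c : α) (w : ℕ → α) :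
    insertLetter S c w i = c :=
  if_pos hi

lemma insertLetter_of_notMem {S : Finset ℕ} {i : ℕ} (hi : i ∉ S) (c : α) (w : ℕ → α) :
    insertLetter S c w i = w (Nat.count (· ∉ S) i) :=
  if_neg hi

lemma insertLetter_empty (c : α) (w : ℕ → α) : insertLetter ∅ c w = w := by
  funext i
  simp [insertLetter]

lemma insertLetter_insert_of_lt {n i : ℕ} (hi : i < n) (S : Finset ℕ) (c : α) (w : ℕ → α) :
    insertLetter (insert n S) c w i = insertLetter S c w i := by
  have hmem : ∀ j < n, j ∈ insert n S ↔ j ∈ S := fun j hj => by simp [hj.ne]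
  simp only [insertLetter, hmem i hi, count_notMem_congr fun j hj => hmem j (hj.trans hi)]

section Order

variable [LinearOrder α]

/-- The major index of the word `w 0 ⋯ w (n - 1)`, with places numbered from `1` in the sum. Words
are total functions, of which only the first `n` values matter. -/
def wordMaj (w : ℕ → α) (n : ℕ) : ℕ :=
  ∑ i ∈ range (n - 1) with w (i + 1) < w i, (i + 1)

/-- The major index of the word `w 0 ⋯ w (n - 1) x`. The extra last letter `x` makes the
generating functions over insertions satisfy a recurrence. -/
def wordMajSnoc (w : ℕ → α) : ℕ → α → ℕ
  | 0, _ => 0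
  | n + 1, x => wordMajSnoc w n (w n) + if x < w n then n + 1 else 0

lemma wordMaj_congr {β : Type*} [LinearOrder β] {w : ℕ → α} {v : ℕ → β} {n : ℕ}
    (h : ∀ i, i + 1 < n → (w (i + 1) < w i ↔ v (i + 1) < v i)) : wordMaj w n = wordMaj v n :=
  sum_congr (filter_congr fun i hi => h i (by rw [mem_range] at hi; omega)) fun _ _ => rfl

lemma wordMajSnoc_congr {w v : ℕ → α} {n : ℕ} (h : ∀ i < n, w i = v i) (x : α) :
    wordMajSnoc w n x = wordMajSnoc v n x := by
  induction n generalizing x with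
  | zero => rfl
  | succ n ih =>
    simp only [wordMajSnoc, h n n.lt_succ_self, ih fun i hi => h i (hi.trans n.lt_succ_self)]

lemma wordMajSnoc_self (w : ℕ → α) (n : ℕ) : wordMajSnoc w n (w n) = wordMaj w (n + 1) := by
  induction n with
  | zero => rfl
  | succ n ih =>
    rw [wordMajSnoc, ih, wordMaj, wordMaj, sum_filter, sum_filter, Nat.add_sub_cancel,
      Nat.add_sub_cancel, sum_range_succ]

lemma wordMajSnoc_of_last_le {w : ℕ → α} {n : ℕ} {x : α} (hx : w (n - 1) ≤ x) :
    wordMajSnoc w n x = wordMaj w n := by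
  cases n with
  | zero => rfl
  | succ n => rw [wordMajSnoc, wordMajSnoc_self,
      if_neg (Nat.add_sub_cancel n 1 ▸ hx).not_gt, add_zero]

lemma wordMajSnoc_eq_zero {w : ℕ → α} {n : ℕ} {c : α} (h : ∀ i < n, w i = c) :
    wordMajSnoc w n c = 0 := by
  induction n with
  | zero => rfl
  | succ n ih =>
    rw [wordMajSnoc, h n n.lt_succ_self, ih fun i hi => h i (hi.trans n.lt_succ_self),
      if_neg (lt_irrefl c)]

lemma wordMajSnoc_insertLetter_succ {S : Finset ℕ} {k f : ℕ}
    (hS : S ∈ powersetCard f (range (k + f))) (c : α) (w : ℕ → α) (x : α) :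
    wordMajSnoc (insertLetter S c w) (k + f + 1) x =
      wordMajSnoc (insertLetter S c w) (k + f) (w k) + if x < w k then k + f + 1 else 0 := by
  have hlast : insertLetter S c w (k + f) = w k := by
    rw [insertLetter_of_notMem (notMem_of_mem_powersetCard_range hS),
      count_notMem_of_mem_powersetCard hS]
  rw [wordMajSnoc, hlast]

lemma wordMajSnoc_insertLetter_insert_succ (S : Finset ℕ) (n : ℕ) (c : α) (w : ℕ → α) (x : α) :
    wordMajSnoc (insertLetter (insert n S) c w) (n + 1) x =
      wordMajSnoc (insertLetter S c w) n c + if x < c then n + 1 else 0 := by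
  have hlast : insertLetter (insert n S) c w n = c :=
    insertLetter_of_mem (mem_insert_self n S) c w
  rw [wordMajSnoc, hlast, wordMajSnoc_congr fun i hi => insertLetter_insert_of_lt hi S c w]

variable {R : Type*} [CommSemiring R] (q : R)

lemma sum_pow_wordMajSnoc_insertLetter_succ (c : α) (w : ℕ → α) (k f : ℕ) (x : α) :
    ∑ S ∈ powersetCard (f + 1) (range (k + f + 2)),
        q ^ wordMajSnoc (insertLetter S c w) (k + f + 2) x =
      (∑ S ∈ powersetCard (f + 1) (range (k + f + 1)),
          q ^ wordMajSnoc (insertLetter S c w) (k + f + 1) (w k)) *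
          q ^ (if x < w k then k + f + 2 else 0) +
        (∑ S ∈ powersetCard f (range (k + f + 1)),
          q ^ wordMajSnoc (insertLetter S c w) (k + f + 1) c) *
          q ^ (if x < c then k + f + 2 else 0) := by
  rw [sum_powersetCard_range_succ, sum_mul, sum_mul]
  congr 1 <;> refine sum_congr rfl fun S hS => ?_
  · rw [← pow_add]
    exact congrArg (q ^ ·) (wordMajSnoc_insertLetter_succ (f := f + 1) hS c w x)
  · rw [← pow_add, ← wordMajSnoc_insertLetter_insert_succ]

/-- Each relative order of `x`, `y`, `c` reduces this to one of the two `q`-Pascal rules. -/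
lemma qbinom_succ_succ_of_ne {c y : α} (hy : y ≠ c) (x : α) (k f : ℕ) :
    q ^ (if y < c then f + 1 else 0) * qbinom q k (f + 1) *
          q ^ (if x < y then k + f + 2 else 0) +
        q ^ (if c < y then k + 1 else 0) * qbinom q (k + 1) f *
          q ^ (if x < c then k + f + 2 else 0) =
      q ^ ((if x < y then k + 1 else 0) + if x < c then f + 1 else 0) *
        qbinom q (k + 1) (f + 1) := by
  have pascal := qbinom_succ_succ q k f
  have pascal' := qbinom_succ_succ' q k f
  rcases hy.lt_or_gt with hyc | hcy
  · simp only [hyc, hyc.not_gt, if_true, if_false]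
    rcases lt_or_ge x y with hxy | hyx
    · simp only [hxy, hxy.trans hyc, if_true, pascal']
      ring
    · simp only [hyx.not_gt, if_false]
      split_ifs
      · rw [pascal]; ring
      · rw [pascal']; ring
  · simp only [hcy, hcy.not_gt, if_true, if_false]
    rcases lt_or_ge x c with hxc | hcx
    · simp only [hxc, hxc.trans hcy, if_true, pascal]
      ring
    · simp only [hcx.not_gt, if_false]
      split_ifs
      · rw [pascal']; ring
      · rw [pascal]; ring

theorem sum_pow_wordMajSnoc_insertLetter {c : α} {w : ℕ → α} {k : ℕ} (hw : ∀ i < k, w i ≠ c)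
    (f : ℕ) (x : α) :
    ∑ S ∈ powersetCard f (range (k + f)), q ^ wordMajSnoc (insertLetter S c w) (k + f) x =
      q ^ (wordMajSnoc w k x + if x < c then f else 0) * qbinom q k f := by
  induction k generalizing f x with
  | zero =>
    have hconst : ∀ i < f, insertLetter (range f) c w i = c :=
      fun i hi => insertLetter_of_mem (mem_range.mpr hi) c w
    have hself : powersetCard f (range f) = {range f} := by
      simpa using powersetCard_self (range f)
    rw [zero_add, hself, sum_singleton, qbinom_zero_left, mul_one, wordMajSnoc, zero_add]
    cases f with
    | zero => simp [wordMajSnoc]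
    | succ f =>
      rw [wordMajSnoc, hconst f f.lt_succ_self,
        wordMajSnoc_eq_zero fun i hi => hconst i (hi.trans f.lt_succ_self), zero_add]
  | succ k ihk =>
    induction f generalizing x with
    | zero => simp [insertLetter_empty, qbinom_zero_right]
    | succ f ihf =>
      have hw' : ∀ i < k, w i ≠ c := fun i hi => hw i (hi.trans k.lt_succ_self)
      have index : k + 1 + f = k + f + 1 := Nat.add_right_comm k 1 f
      rw [index] at ihf
      rw [show k + 1 + (f + 1) = k + f + 2 by omega, sum_pow_wordMajSnoc_insertLetter_succ,
        show k + f + 1 = k + (f + 1) from rfl, ihk hw', show k + (f + 1) = k + f + 1 from rfl, ihf]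
      simp only [wordMajSnoc, lt_irrefl, if_false, add_zero, add_assoc (wordMajSnoc w k (w k)),
        pow_add _ (wordMajSnoc w k (w k))]
      rw [mul_assoc _ _ (qbinom q (k + 1) (f + 1)),
        ← qbinom_succ_succ_of_ne q (hw k k.lt_succ_self) x k f]
      ring

theorem sum_pow_wordMaj_insertLetter {c : α} {w : ℕ → α} {k : ℕ} (hw : ∀ i < k, w i ≠ c)
    (f : ℕ) :
    ∑ S ∈ powersetCard f (range (k + f)), q ^ wordMaj (insertLetter S c w) (k + f) =
      q ^ wordMaj w k * qbinom q k f := by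
  have hlast : ∀ S ∈ powersetCard f (range (k + f)),
      insertLetter S c w (k + f - 1) ≤ max (w (k - 1)) c := by
    intro S hS
    by_cases h : k + f - 1 ∈ S
    · exact (insertLetter_of_mem h c w).trans_le (le_max_right _ _)
    · rw [insertLetter_of_notMem h, count_notMem_pred_of_mem_powersetCard hS h]
      exact le_max_left _ _
  calc ∑ S ∈ powersetCard f (range (k + f)), q ^ wordMaj (insertLetter S c w) (k + f)
      = ∑ S ∈ powersetCard f (range (k + f)),
          q ^ wordMajSnoc (insertLetter S c w) (k + f) (max (w (k - 1)) c) :=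
        sum_congr rfl fun S hS => by rw [wordMajSnoc_of_last_le (hlast S hS)]
    _ = q ^ wordMaj w k * qbinom q k f := by
        rw [sum_pow_wordMajSnoc_insertLetter q hw, if_neg (le_max_right _ _).not_gt, add_zero,
          wordMajSnoc_of_last_le (le_max_left _ _)]

end Order

end Words

namespace CP

variable {ℓ n : ℕ}

/-! ### Colored permutations as words -/

/-- The word of `σ`, with letters in a linear order in which `gtLetter` becomes `>`: the color index
is compared first, and a smaller index gives a bigger letter. -/
def word (σ : CP ℓ n) (i : ℕ) : ℕᵒᵈ ×ₗ ℕ :=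
  toLex (OrderDual.toDual (letter σ i).1, (letter σ i).2)

lemma word_lt_word {m : ℕ} (σ : CP ℓ n) (τ : CP ℓ m) (i j : ℕ) :
    word σ i < word τ j ↔ gtLetter (letter τ j) (letter σ i) := by
  simp [word, gtLetter, Prod.Lex.toLex_lt_toLex, eq_comm]

lemma maj_eq_wordMaj (σ : CP ℓ n) : maj σ = wordMaj (word σ) n := by
  simp only [maj, desSet, wordMaj, word_lt_word]

lemma letter_val (σ : CP ℓ n) (i : Fin n) : letter σ i = ((σ.2 i : ℕ), (σ.1 i : ℕ)) := by
  simp [letter]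

lemma fix_eq_zero_iff (σ : CP ℓ n) : fix σ = 0 ↔ ∀ i, ¬(σ.1 i = i ∧ (σ.2 i : ℕ) = 0) := by
  simp [fix, fixSet, filter_eq_empty_iff]

section FmajSum

variable {R : Type*} [CommSemiring R]

lemma pow_fmaj (q : R) (σ : CP ℓ n) : q ^ fmaj σ = q ^ col σ * (q ^ ℓ) ^ maj σ := by
  rw [fmaj, pow_add, pow_mul, mul_comm]

/-- The generating function of the flag major index over all colored permutations. -/
def fmajSum (q : R) (ℓ n : ℕ) : R :=
  ∑ σ : CP ℓ n, q ^ fmaj σ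

/-- The colored `q`-derangement number `d_{ℓ,n}(q)`, at an element `q` of any semiring. -/
def derangementSum (q : R) (ℓ n : ℕ) : R :=
  ∑ σ : CP ℓ n with fix σ = 0, q ^ fmaj σ

lemma fmajSum_zero (q : R) (ℓ : ℕ) : fmajSum q ℓ 0 = 1 := by
  simp [fmajSum, fmaj, maj, desSet, col]

end FmajSum

/-! ### Inserting the largest value -/

/-- The colored permutation obtained by inserting the largest absolute value, with color `c`, at
place `p` of the word of `τ`. -/
def insertMax (p : Fin (n + 1)) (c : Fin ℓ) (τ : CP ℓ n) : CP ℓ (n + 1) :=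
  ((finSuccEquiv' p).trans ((Equiv.optionCongr τ.1).trans (finSuccEquiv' (Fin.last n)).symm),
    Fin.insertNth (α := fun _ => Fin ℓ) p c τ.2)

section InsertMax

variable (p : Fin (n + 1)) (c : Fin ℓ) (τ : CP ℓ n)

lemma insertMax_fst_self : (insertMax p c τ).1 p = Fin.last n := by
  simp [insertMax]

lemma insertMax_fst_succAbove (j : Fin n) :
    (insertMax p c τ).1 (p.succAbove j) = (τ.1 j).castSucc := by
  simp [insertMax]

lemma insertMax_snd_self : (insertMax p c τ).2 p = c := by
  simp [insertMax]

lemma insertMax_snd_succAbove (j : Fin n) : (insertMax p c τ).2 (p.succAbove j) = τ.2 j := by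
  simp [insertMax]

lemma insertMax_bijective :
    Function.Bijective fun x : Fin (n + 1) × Fin ℓ × CP ℓ n => insertMax x.1 x.2.1 x.2.2 := by
  rw [Fintype.bijective_iff_injective_and_card]
  constructor
  · rintro ⟨p, c, τ⟩ ⟨p', c', τ'⟩ (h : insertMax p c τ = insertMax p' c' τ')
    obtain rfl : p = p' := by
      apply (insertMax p c τ).1.injective
      rw [insertMax_fst_self, h, insertMax_fst_self]
    obtain rfl : c = c' := by
      rw [← insertMax_snd_self p c τ, h, insertMax_snd_self]
    obtain rfl : τ = τ' := by
      refine Prod.ext (Equiv.ext fun j => ?_) (funext fun j => ?_)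
      · apply Fin.castSucc_injective n
        rw [← insertMax_fst_succAbove p c τ, h, insertMax_fst_succAbove]
      · rw [← insertMax_snd_succAbove p c τ, h, insertMax_snd_succAbove]
    rfl
  · simp only [Fintype.card_prod, Fintype.card_perm, Fintype.card_pi, Fintype.card_fin,
      prod_const, card_univ, Nat.factorial_succ, pow_succ]
    ring

lemma col_insertMax : col (insertMax p c τ) = c + col τ := by
  rw [col, Fin.sum_univ_succAbove _ p, insertMax_snd_self]
  simp only [insertMax_snd_succAbove, col]

lemma word_insertMax {i : ℕ} (hi : i < n + 1) :
    word (insertMax p c τ) i =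
      insertLetter {(p : ℕ)} (toLex (OrderDual.toDual (c : ℕ), n)) (word τ) i := by
  obtain ⟨i, rfl⟩ : ∃ i' : Fin (n + 1), (i' : ℕ) = i := ⟨⟨i, hi⟩, rfl⟩
  rcases Fin.eq_self_or_eq_succAbove p i with rfl | ⟨j, rfl⟩
  · rw [insertLetter_of_mem (mem_singleton_self _), word, letter_val, insertMax_fst_self,
      insertMax_snd_self, Fin.val_last]
  · have hne : (p.succAbove j : ℕ) ∉ ({(p : ℕ)} : Finset ℕ) := by
      simp [Fin.val_inj]
    rw [insertLetter_of_notMem hne, count_notMem_singleton_succAbove, word, word, letter_val,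
      letter_val, insertMax_fst_succAbove, insertMax_snd_succAbove, Fin.val_castSucc]

lemma maj_insertMax :
    maj (insertMax p c τ) =
      wordMaj (insertLetter {(p : ℕ)} (toLex (OrderDual.toDual (c : ℕ), n)) (word τ))
        (n + 1) := by
  rw [maj_eq_wordMaj]
  refine wordMaj_congr fun i hi => ?_
  rw [word_insertMax p c τ hi, word_insertMax p c τ (i.lt_succ_self.trans hi)]

lemma word_ne_max (b : ℕᵒᵈ) {i : ℕ} (hi : i < n) : word τ i ≠ toLex (b, n) := by
  intro h
  have hval : (letter τ i).2 = n := congrArg (fun x => (ofLex x).2) h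
  rw [letter, dif_pos hi] at hval
  exact (τ.1 ⟨i, hi⟩).isLt.ne hval

end InsertMax

variable {R : Type*} [CommSemiring R] (q : R)

lemma sum_pow_fmaj_insertMax (c : Fin ℓ) (τ : CP ℓ n) :
    ∑ p, q ^ fmaj (insertMax p c τ) = q ^ (c : ℕ) * (qint (q ^ ℓ) (n + 1) * q ^ fmaj τ) := by
  have h := sum_pow_wordMaj_insertLetter (q ^ ℓ)
    (fun i hi => word_ne_max τ (OrderDual.toDual (c : ℕ)) hi) 1
  rw [powersetCard_one, sum_map, sum_range, qbinom_one_right, ← maj_eq_wordMaj] at h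
  simp only [Function.Embedding.coeFn_mk, ← maj_insertMax] at h
  simp only [pow_fmaj, col_insertMax, ← mul_sum, h, pow_add]
  ring

theorem fmajSum_succ (ℓ n : ℕ) :
    fmajSum q ℓ (n + 1) = qint q ℓ * qint (q ^ ℓ) (n + 1) * fmajSum q ℓ n := by
  rw [fmajSum, ← insertMax_bijective.sum_comp, Fintype.sum_prod_type_right]
  simp only [sum_pow_fmaj_insertMax, Fintype.sum_prod_type (α₁ := Fin ℓ), ← mul_sum]
  rw [← sum_mul, ← fmajSum, ← sum_range (q ^ ·), ← qint, mul_assoc]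

/-! ### Inserting fixed points -/

/-- The places of the fixed points of `σ`, as natural numbers. -/
def fixPlaces (σ : CP ℓ n) : Finset ℕ :=
  (fixSet σ).map Fin.valEmbedding

lemma mem_fixPlaces (σ : CP ℓ n) (i : Fin n) :
    (i : ℕ) ∈ fixPlaces σ ↔ σ.1 i = i ∧ (σ.2 i : ℕ) = 0 := by
  simp [fixPlaces, fixSet, Fin.val_inj]

lemma fixPlaces_subset_range (σ : CP ℓ n) : fixPlaces σ ⊆ range n := by
  intro i hi
  obtain ⟨j, -, rfl⟩ := mem_map.mp hi
  exact mem_range.mpr j.isLt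

lemma fixPlaces_eq_iff {σ : CP ℓ n} {S : Finset ℕ} (hS : S ⊆ range n) :
    fixPlaces σ = S ↔ ∀ i : Fin n, (i : ℕ) ∈ S ↔ σ.1 i = i ∧ (σ.2 i : ℕ) = 0 := by
  refine ⟨fun h i => h ▸ mem_fixPlaces σ i, fun h => Finset.ext fun i => ?_⟩
  by_cases hi : i < n
  · exact (mem_fixPlaces σ ⟨i, hi⟩).trans (h ⟨i, hi⟩).symm
  · exact iff_of_false (fun hmem => hi (mem_range.mp (fixPlaces_subset_range σ hmem)))
      fun hmem => hi (mem_range.mp (hS hmem))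

section InsertFixed

variable [NeZero ℓ] {S : Finset ℕ} {k f : ℕ}

/-- The colored permutation which has fixed points at the places in `S` and carries a copy of `τ` on
the other places. -/
noncomputable def insertFixed (hS : S ∈ powersetCard f (range (k + f))) (τ : CP ℓ k) :
    CP ℓ (k + f) :=
  (τ.1.extendDomain (finEquivNotMem hS),
    fun i => if h : (i : ℕ) ∈ S then 0 else τ.2 ((finEquivNotMem hS).symm ⟨i, h⟩))

variable (hS : S ∈ powersetCard f (range (k + f))) (τ : CP ℓ k)

lemma insertFixed_fst_of_mem {i : Fin (k + f)} (hi : (i : ℕ) ∈ S) :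
    (insertFixed hS τ).1 i = i :=
  Equiv.Perm.extendDomain_apply_not_subtype _ _ (not_not.mpr hi)

lemma insertFixed_snd_of_mem {i : Fin (k + f)} (hi : (i : ℕ) ∈ S) :
    (insertFixed hS τ).2 i = 0 :=
  dif_pos hi

lemma insertFixed_fst_finEquivNotMem (j : Fin k) :
    (insertFixed hS τ).1 (finEquivNotMem hS j).1 = (finEquivNotMem hS (τ.1 j)).1 :=
  Equiv.Perm.extendDomain_apply_image _ _ _

lemma insertFixed_snd_finEquivNotMem (j : Fin k) :
    (insertFixed hS τ).2 (finEquivNotMem hS j).1 = τ.2 j := by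
  simp [insertFixed, (finEquivNotMem hS j).2]

lemma insertFixed_injective : Function.Injective (insertFixed (ℓ := ℓ) hS) := by
  intro τ τ' h
  refine Prod.ext (Equiv.ext fun j => ?_) (funext fun j => ?_)
  · apply (finEquivNotMem hS).injective
    apply Subtype.ext
    rw [← insertFixed_fst_finEquivNotMem, h, insertFixed_fst_finEquivNotMem]
  · rw [← insertFixed_snd_finEquivNotMem hS, h, insertFixed_snd_finEquivNotMem]

variable {τ} in
lemma fixPlaces_insertFixed (hτ : fix τ = 0) : fixPlaces (insertFixed hS τ) = S := by
  rw [fixPlaces_eq_iff (mem_powersetCard.mp hS).1]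
  intro i
  by_cases hi : (i : ℕ) ∈ S
  · simp [hi, insertFixed_fst_of_mem hS τ hi, insertFixed_snd_of_mem hS τ hi]
  · obtain ⟨j, rfl⟩ := exists_eq_finEquivNotMem hS hi
    rw [insertFixed_fst_finEquivNotMem, insertFixed_snd_finEquivNotMem, Subtype.val_inj,
      (finEquivNotMem hS).apply_eq_iff_eq]
    exact iff_of_false hi ((fix_eq_zero_iff τ).mp hτ j)

lemma exists_insertFixed_eq {σ : CP ℓ (k + f)} (hσ : fixPlaces σ = S) :
    ∃ τ : CP ℓ k, fix τ = 0 ∧ insertFixed hS τ = σ := by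
  have hmem := (fixPlaces_eq_iff (mem_powersetCard.mp hS).1).mp hσ
  have hinv (i : Fin (k + f)) : (σ.1 i : ℕ) ∉ S ↔ (i : ℕ) ∉ S := by
    refine not_congr ⟨fun h => ?_, fun h => ?_⟩
    · rwa [σ.1.injective ((hmem _).mp h).1] at h
    · rwa [((hmem i).mp h).1]
  let τ : CP ℓ k :=
    ((finEquivNotMem hS).trans ((σ.1.subtypePerm hinv).trans (finEquivNotMem hS).symm),
      fun j => σ.2 (finEquivNotMem hS j).1)
  have hfst (j : Fin k) : (finEquivNotMem hS (τ.1 j)).1 = σ.1 (finEquivNotMem hS j).1 := by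
    simp [τ]
  refine ⟨τ, (fix_eq_zero_iff τ).mpr ?_, Prod.ext (Equiv.ext fun i => ?_) (funext fun i => ?_)⟩
  · rintro j ⟨hj, hcolor⟩
    exact (finEquivNotMem hS j).2 ((hmem _).mpr ⟨by rw [← hfst, hj], hcolor⟩)
  · by_cases hi : (i : ℕ) ∈ S
    · rw [insertFixed_fst_of_mem hS τ hi, ((hmem i).mp hi).1]
    · obtain ⟨j, rfl⟩ := exists_eq_finEquivNotMem hS hi
      rw [insertFixed_fst_finEquivNotMem, hfst]
  · by_cases hi : (i : ℕ) ∈ S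
    · rw [insertFixed_snd_of_mem hS τ hi, Fin.ext_iff, ((hmem i).mp hi).2, Fin.val_zero]
    · obtain ⟨j, rfl⟩ := exists_eq_finEquivNotMem hS hi
      rw [insertFixed_snd_finEquivNotMem]

lemma col_insertFixed : col (insertFixed hS τ) = col τ := by
  have hfixed : ∑ i : {i : Fin (k + f) // ¬(i : ℕ) ∉ S}, ((insertFixed hS τ).2 i.1 : ℕ) = 0 :=
    sum_eq_zero fun i _ => by rw [insertFixed_snd_of_mem hS τ (not_not.mp i.2), Fin.val_zero]
  rw [col, ← Fintype.sum_subtype_add_sum_subtype (fun i : Fin (k + f) => (i : ℕ) ∉ S), hfixed,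
    add_zero, ← (finEquivNotMem hS).sum_comp]
  simp only [insertFixed_snd_finEquivNotMem, col]

lemma letter_insertFixed_of_mem {i : ℕ} (hi : i < k + f) (h : i ∈ S) :
    letter (insertFixed hS τ) i = (0, i) := by
  rw [letter, dif_pos hi, insertFixed_fst_of_mem hS τ (i := ⟨i, hi⟩) h,
    insertFixed_snd_of_mem hS τ (i := ⟨i, hi⟩) h, Fin.val_zero]

lemma letter_insertFixed_of_notMem {i : ℕ} (hi : i < k + f) (h : i ∉ S) :
    letter (insertFixed hS τ) i =
      ((letter τ (Nat.count (· ∉ S) i)).1,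
        Nat.nth (· ∉ S) (letter τ (Nat.count (· ∉ S) i)).2) := by
  obtain ⟨j, hj⟩ := exists_eq_finEquivNotMem hS (i := ⟨i, hi⟩) h
  have hcount : Nat.count (· ∉ S) i = j := by
    rw [show i = Nat.nth (· ∉ S) j from congrArg Fin.val hj]
    exact Nat.count_nth_of_infinite (infinite_notMem S) j
  rw [hcount, letter, dif_pos hi, hj, insertFixed_fst_finEquivNotMem,
    insertFixed_snd_finEquivNotMem, letter_val]
  rfl

end InsertFixed

/-! ### The excedance sign -/

/-- The excedance sign of the letter of `σ` at place `i`: `1` at an excedance, `0` at a fixed point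
and `-1` otherwise, in particular at every letter with a color other than `ζ ^ 0`. -/
def excSign (σ : CP ℓ n) (i : ℕ) : ℤ :=
  if (letter σ i).1 = 0 ∧ i ≤ (letter σ i).2 then if i < (letter σ i).2 then 1 else 0 else -1

/-- The word of `σ` with every letter preceded by its excedance sign. It has the same descents as
the word of `σ`, but in it the fixed points compare with the other letters independently of their
values. -/
def signedWord (σ : CP ℓ n) (i : ℕ) : ℤ ×ₗ (ℕᵒᵈ ×ₗ ℕ) :=
  toLex (excSign σ i, word σ i)

lemma signedWord_succ_lt_iff (σ : CP ℓ n) {i : ℕ} (hi : i + 1 < n) :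
    signedWord σ (i + 1) < signedWord σ i ↔ word σ (i + 1) < word σ i := by
  have hne : (letter σ (i + 1)).2 ≠ (letter σ i).2 := by
    rw [letter_val σ ⟨i + 1, hi⟩, letter_val σ ⟨i, i.lt_succ_self.trans hi⟩]
    simp [Fin.val_inj]
  simp only [signedWord, Prod.Lex.toLex_lt_toLex, word_lt_word, gtLetter, excSign]
  split_ifs <;> omega

lemma maj_eq_wordMaj_signedWord (σ : CP ℓ n) : maj σ = wordMaj (signedWord σ) n := by
  rw [maj_eq_wordMaj]
  exact wordMaj_congr fun i hi => (signedWord_succ_lt_iff σ hi).symm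

lemma excSign_ne_zero {τ : CP ℓ n} (hτ : fix τ = 0) {i : ℕ} (hi : i < n) : excSign τ i ≠ 0 := by
  have h := (fix_eq_zero_iff τ).mp hτ ⟨i, hi⟩
  rw [Fin.ext_iff] at h
  rw [excSign, letter, dif_pos hi]
  split_ifs <;> simp at h ⊢
  omega

section SignedWordInsertFixed

variable [NeZero ℓ] {S : Finset ℕ} {k f : ℕ} (hS : S ∈ powersetCard f (range (k + f)))

lemma excSign_insertFixed_of_mem (τ : CP ℓ k) {i : ℕ} (hi : i < k + f) (h : i ∈ S) :
    excSign (insertFixed hS τ) i = 0 := by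
  simp [excSign, letter_insertFixed_of_mem hS τ hi h]

lemma excSign_insertFixed_of_notMem (τ : CP ℓ k) {i : ℕ} (hi : i < k + f) (h : i ∉ S) :
    excSign (insertFixed hS τ) i = excSign τ (Nat.count (· ∉ S) i) := by
  have hmono := nth_notMem_strictMono S
  have hnth : Nat.nth (· ∉ S) (Nat.count (· ∉ S) i) = i := Nat.nth_count h
  simp only [excSign, letter_insertFixed_of_notMem hS τ hi h]
  generalize Nat.count (· ∉ S) i = j at hnth ⊢
  simp only [← hnth, hmono.lt_iff_lt, hmono.le_iff_le]

lemma word_insertFixed_lt_iff (τ : CP ℓ k) {i j : ℕ} (hi : i < k + f) (hj : j < k + f)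
    (hiS : i ∉ S) (hjS : j ∉ S) :
    word (insertFixed hS τ) i < word (insertFixed hS τ) j ↔
      word τ (Nat.count (· ∉ S) i) < word τ (Nat.count (· ∉ S) j) := by
  simp only [word_lt_word, gtLetter, letter_insertFixed_of_notMem hS τ hi hiS,
    letter_insertFixed_of_notMem hS τ hj hjS, (nth_notMem_strictMono S).lt_iff_lt]

lemma signedWord_insertFixed_lt_iff {τ : CP ℓ k} (hτ : fix τ = 0) (b : ℕᵒᵈ ×ₗ ℕ) {i j : ℕ}
    (hi : i < k + f) (hj : j < k + f) (hij : i ∉ S ∨ j ∉ S) :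
    signedWord (insertFixed hS τ) i < signedWord (insertFixed hS τ) j ↔
      insertLetter S (toLex (0, b)) (signedWord τ) i <
        insertLetter S (toLex (0, b)) (signedWord τ) j := by
  by_cases hiS : i ∈ S <;> by_cases hjS : j ∈ S
  · exact absurd hij (by simp [hiS, hjS])
  · have hne := excSign_ne_zero hτ (count_notMem_lt hS hj hjS)
    simp only [signedWord, insertLetter_of_mem hiS, insertLetter_of_notMem hjS,
      excSign_insertFixed_of_mem hS τ hi hiS, excSign_insertFixed_of_notMem hS τ hj hjS,
      Prod.Lex.toLex_lt_toLex, hne.symm, false_and]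
  · have hne := excSign_ne_zero hτ (count_notMem_lt hS hi hiS)
    simp only [signedWord, insertLetter_of_notMem hiS, insertLetter_of_mem hjS,
      excSign_insertFixed_of_notMem hS τ hi hiS, excSign_insertFixed_of_mem hS τ hj hjS,
      Prod.Lex.toLex_lt_toLex, hne, false_and]
  · simp only [signedWord, insertLetter_of_notMem hiS, insertLetter_of_notMem hjS,
      excSign_insertFixed_of_notMem hS τ hi hiS, excSign_insertFixed_of_notMem hS τ hj hjS,
      Prod.Lex.toLex_lt_toLex, word_insertFixed_lt_iff hS τ hi hj hiS hjS]

lemma not_word_insertFixed_succ_lt (τ : CP ℓ k) {i : ℕ} (hi : i + 1 < k + f) (hiS : i ∈ S)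
    (hsucc : i + 1 ∈ S) : ¬word (insertFixed hS τ) (i + 1) < word (insertFixed hS τ) i := by
  simp [word_lt_word, gtLetter, letter_insertFixed_of_mem hS τ hi hsucc,
    letter_insertFixed_of_mem hS τ (i.lt_succ_self.trans hi) hiS]

lemma maj_insertFixed {τ : CP ℓ k} (hτ : fix τ = 0) (b : ℕᵒᵈ ×ₗ ℕ) :
    maj (insertFixed hS τ) =
      wordMaj (insertLetter S (toLex (0, b)) (signedWord τ)) (k + f) := by
  rw [maj_eq_wordMaj_signedWord]
  refine wordMaj_congr fun i hi => ?_
  by_cases h : i ∈ S ∧ i + 1 ∈ S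
  · rw [signedWord_succ_lt_iff _ hi, insertLetter_of_mem h.1, insertLetter_of_mem h.2]
    exact iff_of_false (not_word_insertFixed_succ_lt hS τ hi h.1 h.2) (lt_irrefl _)
  · exact signedWord_insertFixed_lt_iff hS hτ b hi (i.lt_succ_self.trans hi)
      (not_and_or.mp h).symm

end SignedWordInsertFixed

variable [NeZero ℓ] {R : Type*} [CommSemiring R] (q : R)

lemma sum_pow_fmaj_insertFixed {k : ℕ} {τ : CP ℓ k} (hτ : fix τ = 0) (f : ℕ) :
    ∑ S : powersetCard f (range (k + f)), q ^ fmaj (insertFixed S.2 τ) =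
      qbinom (q ^ ℓ) k f * q ^ fmaj τ := by
  let b : ℕᵒᵈ ×ₗ ℕ := toLex (OrderDual.toDual 0, 0)
  have hne (i : ℕ) (hi : i < k) : signedWord τ i ≠ toLex (0, b) := fun h =>
    excSign_ne_zero hτ hi (congrArg (fun x => (ofLex x).1) h)
  simp only [pow_fmaj, col_insertFixed, maj_insertFixed _ hτ b, ← mul_sum]
  rw [sum_coe_sort (powersetCard f (range (k + f))) fun S =>
      (q ^ ℓ) ^ wordMaj (insertLetter S (toLex (0, b)) (signedWord τ)) (k + f),
    sum_pow_wordMaj_insertLetter (q ^ ℓ) hne, ← maj_eq_wordMaj_signedWord]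
  ring

lemma sum_pow_fmaj_fixPlaces_eq {k f : ℕ} {S : Finset ℕ}
    (hS : S ∈ powersetCard f (range (k + f))) :
    ∑ σ : CP ℓ (k + f) with fixPlaces σ = S, q ^ fmaj σ =
      ∑ τ : CP ℓ k with fix τ = 0, q ^ fmaj (insertFixed hS τ) := by
  symm
  refine sum_bij (fun τ _ => insertFixed hS τ) (fun τ hτ => ?_)
    (fun _ _ _ _ h => insertFixed_injective hS h) (fun σ hσ => ?_) fun _ _ => rfl
  · exact mem_filter.mpr ⟨mem_univ _, fixPlaces_insertFixed hS (mem_filter.mp hτ).2⟩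
  · obtain ⟨τ, hτ, h⟩ := exists_insertFixed_eq hS (mem_filter.mp hσ).2
    exact ⟨τ, mem_filter.mpr ⟨mem_univ _, hτ⟩, h⟩

lemma sum_pow_fmaj_card_fixPlaces (k f : ℕ) :
    ∑ S ∈ powersetCard f (range (k + f)), ∑ σ : CP ℓ (k + f) with fixPlaces σ = S, q ^ fmaj σ =
      qbinom (q ^ ℓ) k f * derangementSum q ℓ k := by
  rw [← sum_coe_sort, derangementSum, mul_sum]
  calc ∑ S : powersetCard f (range (k + f)),
        ∑ σ : CP ℓ (k + f) with fixPlaces σ = S, q ^ fmaj σ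
      = ∑ τ : CP ℓ k with fix τ = 0,
          ∑ S : powersetCard f (range (k + f)), q ^ fmaj (insertFixed S.2 τ) := by
        rw [sum_comm]
        exact sum_congr rfl fun S _ => sum_pow_fmaj_fixPlaces_eq q S.2
    _ = ∑ τ : CP ℓ k with fix τ = 0, qbinom (q ^ ℓ) k f * q ^ fmaj τ :=
        sum_congr rfl fun τ hτ => sum_pow_fmaj_insertFixed q (mem_filter.mp hτ).2 f

theorem sum_qbinom_mul_derangementSum (ℓ : ℕ) [NeZero ℓ] (n : ℕ) :
    ∑ p ∈ antidiagonal n, qbinom (q ^ ℓ) p.1 p.2 * derangementSum q ℓ p.1 = fmajSum q ℓ n := by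
  have hmaps : ∀ σ ∈ (univ : Finset (CP ℓ n)), fixPlaces σ ∈ (range n).powerset :=
    fun σ _ => mem_powerset.mpr (fixPlaces_subset_range σ)
  symm
  calc fmajSum q ℓ n
      = ∑ f ∈ range (n + 1), ∑ S ∈ powersetCard f (range n),
          ∑ σ : CP ℓ n with fixPlaces σ = S, q ^ fmaj σ := by
        rw [fmajSum, ← sum_fiberwise_of_maps_to hmaps, sum_powerset, card_range]
    _ = ∑ p ∈ antidiagonal n, ∑ S ∈ powersetCard p.2 (range n),
          ∑ σ : CP ℓ n with fixPlaces σ = S, q ^ fmaj σ := by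
        rw [← Nat.sum_antidiagonal_swap (n := n)]
        exact (Nat.sum_antidiagonal_eq_sum_range_succ (fun f _ => ∑ S ∈ powersetCard f (range n),
          ∑ σ : CP ℓ n with fixPlaces σ = S, q ^ fmaj σ) n).symm
    _ = ∑ p ∈ antidiagonal n, qbinom (q ^ ℓ) p.1 p.2 * derangementSum q ℓ p.1 :=
        sum_congr rfl fun p hp => by
          rw [← sum_pow_fmaj_card_fixPlaces, HasAntidiagonal.mem_antidiagonal.mp hp]

end CP

theorem colored_q_derangement_recurrence_general {R : Type*} [CommRing R] (q : R) {ℓ : ℕ}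
    (hℓ : 1 ≤ ℓ) (n : ℕ) :
    CP.derangementSum q ℓ (n + 1) =
      qint q (ℓ * (n + 1)) * CP.derangementSum q ℓ n +
        (-1) ^ (n + 1) * q ^ (ℓ * (n + 1).choose 2) := by
  have : NeZero ℓ := ⟨Nat.one_le_iff_ne_zero.mp hℓ⟩
  rw [qint_mul, pow_mul]
  exact recurrence_of_sum_qbinom_mul_eq (q ^ ℓ) (qint q ℓ) (CP.fmajSum_zero q ℓ)
    (CP.fmajSum_succ q ℓ) (CP.sum_qbinom_mul_derangementSum q ℓ) n

open Polynomial in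
/-- Recurrence for the colored q-derangement numbers:
`d_{ℓ,n+1}(q) = [ℓ(n+1)]_q · d_{ℓ,n}(q) + (−1)^{n+1} q^{ℓ·C(n+1,2)}`. -/
theorem colored_q_derangement_recurrence (ℓ : ℕ) (hℓ : 1 ≤ ℓ) (n : ℕ) :
    (∑ σ ∈ (univ : Finset (CP ℓ (n + 1))).filter fun σ => CP.fix σ = 0,
        (X : Polynomial ℤ) ^ CP.fmaj σ) =
      qint (X : Polynomial ℤ) (ℓ * (n + 1)) *
        (∑ σ ∈ (univ : Finset (CP ℓ n)).filter fun σ => CP.fix σ = 0,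
          (X : Polynomial ℤ) ^ CP.fmaj σ) +
      (-1) ^ (n + 1) * (X : Polynomial ℤ) ^ (ℓ * (n + 1).choose 2) :=
  colored_q_derangement_recurrence_general X hℓ n
end

section
/- Let R be a commutative ring, let (x_m)_{m≥0} and (z_m)_{m≥0} and (y_n)_{n≥1} be sequences in R, and define an array (a_{n,m})_{n,m≥0} by a_{0,m} = x_m for all m, and a_{n,m} = z_m·a_{n−1,m+1} + y_n·a_{n−1,m} for n≥1. Then for all n,m≥0: a_{n,m} = Σ_{k=0}^n x_{m+k} · (z_m z_{m+1}⋯z_{m+k−1}) · e_{n−k}(y_1, y_2, …, y_n), where e_i denotes the i-th elementary symmetric polynomial (with the empty product z_m⋯z_{m+k−1} = 1 when k=0). -/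
open Finset

/-!
With `T` the weighted shift `(T f) m = z_m f_{m+1}`, the recurrence says that the rows of the array
satisfy `a_{n+1} = (T + y_{n+1}) a_n`, so that `a_n = (T + y_n) ⋯ (T + y_1) x`. All these factors
are polynomials in `T`, hence Vieta's formula expands their product as `∑_k e_{n-k}(y_1,…,y_n) T^k`,
and `(T^k x) m = z_m ⋯ z_{m+k-1} x_{m+k}`.
-/

section Polynomial

open Polynomial

variable {R : Type*} [CommSemiring R]

theorem natDegree_prod_X_add_C_le {ι : Type*} (s : Finset ι) (y : ι → R) :
    (∏ i ∈ s, (X + C (y i))).natDegree ≤ #s :=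
  calc (∏ i ∈ s, (X + C (y i))).natDegree
    _ ≤ ∑ i ∈ s, (X + C (y i)).natDegree := natDegree_prod_le s _
    _ ≤ #s • 1 := sum_le_card_nsmul s _ 1 fun _ _ => natDegree_add_C.trans_le natDegree_X_le
    _ = #s := nsmul_one _

theorem aeval_prod_X_add_C_eq_sum {A ι : Type*} [Semiring A] [Algebra R A] (T : A)
    (s : Finset ι) (y : ι → R) :
    aeval T (∏ i ∈ s, (X + C (y i))) =
      ∑ k ∈ range (#s + 1), (∑ t ∈ s.powersetCard (#s - k), ∏ i ∈ t, y i) • T ^ k := by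
  rw [aeval_eq_sum_range' (Nat.lt_succ_of_le (natDegree_prod_X_add_C_le s y))]
  refine sum_congr rfl fun k hk => ?_
  rw [prod_X_add_C_coeff s y (mem_range_succ_iff.1 hk)]

variable {M : Type*} [AddCommMonoid M] [Module R M]

theorem eq_aeval_prod_X_add_C_apply_of_succ (T : Module.End R M) (y : ℕ → R) (v : ℕ → M)
    (hsucc : ∀ n, v (n + 1) = T (v n) + y (n + 1) • v n) (n : ℕ) :
    v n = aeval T (∏ j ∈ Icc 1 n, (X + C (y j))) (v 0) := by
  induction n with
  | zero => simp
  | succ n ih =>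
    rw [prod_Icc_succ_top (Nat.le_add_left 1 n), mul_comm, map_mul, Module.End.mul_apply, ← ih,
      hsucc, map_add, aeval_X, aeval_C, LinearMap.add_apply, Module.algebraMap_end_apply]

theorem eq_sum_smul_pow_apply_of_succ (T : Module.End R M) (y : ℕ → R) (v : ℕ → M)
    (hsucc : ∀ n, v (n + 1) = T (v n) + y (n + 1) • v n) (n : ℕ) :
    v n = ∑ k ∈ range (n + 1),
      (∑ t ∈ (Icc 1 n).powersetCard (n - k), ∏ j ∈ t, y j) • (T ^ k) (v 0) := by
  rw [eq_aeval_prod_X_add_C_apply_of_succ T y v hsucc n, aeval_prod_X_add_C_eq_sum]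
  simp only [Nat.card_Icc, Nat.add_sub_cancel, LinearMap.sum_apply, LinearMap.smul_apply]

end Polynomial

section WeightedShift

variable {R M : Type*} [CommSemiring R] [AddCommMonoid M] [Module R M]

/-- The backward shift on sequences in `M` weighted by `z`, mapping `f` to `m ↦ z m • f (m + 1)`. It
is the operator by which the first term of the recurrence acts on the rows of the array. -/
def weightedShift (z : ℕ → R) : Module.End R (ℕ → M) :=
  LinearMap.pi fun m => z m • LinearMap.proj (m + 1)

theorem weightedShift_apply (z : ℕ → R) (f : ℕ → M) (m : ℕ) :
    weightedShift z f m = z m • f (m + 1) :=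
  rfl

theorem weightedShift_pow_apply (z : ℕ → R) (k : ℕ) (f : ℕ → M) (m : ℕ) :
    (weightedShift z ^ k) f m = (∏ i ∈ range k, z (m + i)) • f (m + k) := by
  induction k generalizing f with
  | zero => simp
  | succ k ih =>
    rw [pow_succ, Module.End.mul_apply, ih, weightedShift_apply, smul_smul, ← prod_range_succ,
      add_assoc]

end WeightedShift

theorem array_explicit_formula_general {R M : Type*} [CommSemiring R] [AddCommMonoid M] [Module R M]
    (x : ℕ → M) (z y : ℕ → R) (a : ℕ → ℕ → M)
    (h0 : ∀ m, a 0 m = x m)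
    (hrec : ∀ n m, a (n + 1) m = z m • a n (m + 1) + y (n + 1) • a n m) (n m : ℕ) :
    a n m = ∑ k ∈ range (n + 1),
      (∑ T ∈ (Icc 1 n).powersetCard (n - k), ∏ j ∈ T, y j) •
        (∏ i ∈ range k, z (m + i)) • x (m + k) := by
  have hrow : ∀ n, a (n + 1) = weightedShift z (a n) + y (n + 1) • a n :=
    fun n => funext (hrec n)
  rw [eq_sum_smul_pow_apply_of_succ (weightedShift z) y a hrow n, Finset.sum_apply]
  simp only [Pi.smul_apply, weightedShift_pow_apply, h0]

/-- For an array defined by `a 0 m = x m` and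
`a n m = z m · a (n−1) (m+1) + y n · a (n−1) m`, one has
`a n m = Σ_{k=0}^n x_{m+k} (z_m⋯z_{m+k−1}) e_{n−k}(y_1,…,y_n)`,
where `e_i(y_1,…,y_n) = Σ_{T ⊆ {1,…,n}, |T| = i} Π_{j ∈ T} y_j`. -/
theorem array_explicit_formula {R : Type*} [CommRing R]
    (x z : ℕ → R) (y : ℕ → R) (a : ℕ → ℕ → R)
    (h0 : ∀ m, a 0 m = x m)
    (hrec : ∀ n m, a (n + 1) m = z m * a n (m + 1) + y (n + 1) * a n m) :
    ∀ n m, a n m = ∑ k ∈ range (n + 1),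
      x (m + k) * (∏ i ∈ range k, z (m + i)) *
        ∑ T ∈ (Icc 1 n).powersetCard (n - k), ∏ j ∈ T, y j := by
  simpa only [smul_eq_mul, mul_comm] using array_explicit_formula_general x z y a h0 hrec
end
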